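/- arXiv:2603.19003 — 3 statements merged into one kernel-verified Lean document; each statement's English description precedes it below -/
import Mathlib

section
/- Let (G,w,x) be a finite weighted graph, o ∈ V(G), and H ≥ 1 such that the ball G_H := B_H(G,o), the subgraph induced on the vertices at graph distance at most H from o, is a tree. Let MD be an optimal monomer-dimer configuration of (G,w,x), and assume that for every subset U of the vertices of G_H at distance exactly H from o, the weighted graph G_H − U has a unique optimal monomer-dimer configuration. Let Z be the unique function from ordered pairs of adjacent vertices of G_H to ℝ ∪ {+∞} such that: (i) whenever v is at distance exactly H from o and u is its unique neighbour in G_H at distance H−1, Z(u,v) = +∞ if v is covered by a dimer of MD whose other endpoint lies outside G_H, and Z(u,v) = x(v) otherwise; (ii) for every other ordered pair (u,v) of adjacent vertices of G_H, Z(u,v) = max( x(v), max_{u' ∼ v in G_H, u' ≠ u} ( w(v,u') − Z(v,u') ) ), with the conventions that w − (+∞) = −∞ and that the inner maximum over an empty set is −∞ (so Z(u,v) = x(v) when u is the only neighbour of v in G_H). Then for every edge {u,v} of G_H: {u,v} ∈ MD if and only if w(u,v) > Z(u,v) + Z(v,u), the inequality being false whenever the right-hand side equals +∞. -/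
open scoped Classical

/-- `M` is a monomer-dimer configuration (matching) of the induced weighted subgraph of `G`
on the vertex set `S`: all its edges are edges of `G` with both endpoints in `S`, and
its edges are pairwise non-adjacent. -/
def IsMatchingOn {V : Type*} (G : SimpleGraph V) (S : Set V) (M : Finset (Sym2 V)) : Prop :=
  (∀ e ∈ M, e ∈ G.edgeSet ∧ ∀ v, v ∈ e → v ∈ S) ∧
  (∀ e ∈ M, ∀ f ∈ M, e ≠ f → ∀ v, v ∈ e → v ∉ f)

/-- The monomer-dimer weight of `M` on vertex set `S`: the sum of the edge weights of the
dimers plus the sum of the vertex weights of the monomers (vertices of `S` not covered). -/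
noncomputable def MDweight {V : Type*} [Fintype V] (w : Sym2 V → ℝ) (x : V → ℝ) (S : Set V)
    (M : Finset (Sym2 V)) : ℝ :=
  ∑ e ∈ M, w e + ∑ v ∈ Finset.univ.filter (fun v => v ∈ S ∧ ∀ e ∈ M, v ∉ e), x v

/-- `OPT G w x S` is the maximal monomer-dimer weight over matchings of the induced weighted
subgraph of `G` on `S`. -/
noncomputable def OPT {V : Type*} [Fintype V] (G : SimpleGraph V) (w : Sym2 V → ℝ)
    (x : V → ℝ) (S : Set V) : ℝ :=
  sSup {r | ∃ M, IsMatchingOn G S M ∧ MDweight w x S M = r}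

/-- `M` is an optimal monomer-dimer configuration of the induced weighted subgraph on `S`. -/
def IsOptimalOn {V : Type*} [Fintype V] (G : SimpleGraph V) (w : Sym2 V → ℝ) (x : V → ℝ)
    (S : Set V) (M : Finset (Sym2 V)) : Prop :=
  IsMatchingOn G S M ∧ ∀ M', IsMatchingOn G S M' → MDweight w x S M' ≤ MDweight w x S M

/-!
Let `U` be the set of vertices of the ball `B` that `MD` matches to the outside of `B`; they lie
on the sphere of radius `H`. The dimers of `MD` inside `B` form an optimal matching of `B \ U`
(`isOptimalOn_restrict`), hence the unique one. Sphere vertices are leaves of the ball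
(`eq_of_adj_sphere`), so `Z` satisfies the recursion (ii) at every vertex of `B \ U`, while
`Z u v = ⊤` for `v ∈ U`.

Messages are marginal gains: `Z u v = OPT S - OPT (S \ {v})` whenever `S ⊆ B \ U` omits `u` and
contains the part of `B \ U` lying beyond `v` as seen from `u` (`message_eq`). Conditioning on
whether `v` is a monomer or to which `y` it is matched gives
`OPT S - OPT (S \ {v}) = max (x v) (max_y (w v y - (OPT (S \ {v}) - OPT (S \ {v, y}))))`,
which is the recursion for `Z`, because `S \ {v}` is an admissible set for the message `Z v y`.
Acyclicity makes the branch at `y` a proper subset of the branch at `v`, so induction applies.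

The same conditioning on `B \ U`, with the edge `uv` forbidden, shows that the best weight of a
matching avoiding `uv` is
`Z u v + OPT (B \ U \ {v}) = Z u v + Z v u + OPT (B \ U \ {u, v})`, whereas the best weight of a
matching using `uv` is `w u v + OPT (B \ U \ {u, v})`. By uniqueness of the optimum, `uv` is a
dimer exactly when the second quantity is strictly larger.
-/

/-! ### Weights of matchings on vertex subsets -/

section Weights

variable {V : Type*} {G : SimpleGraph V}

lemma IsMatchingOn.union {S T : Set V} (hST : Disjoint S T) {M N : Finset (Sym2 V)}
    (hM : IsMatchingOn G S M) (hN : IsMatchingOn G T N) : IsMatchingOn G (S ∪ T) (M ∪ N) := by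
  refine ⟨fun e he => ?_, fun e he f hf hef v hve hvf => ?_⟩
  · rcases Finset.mem_union.1 he with h | h
    · exact ⟨(hM.1 e h).1, fun v hv => Or.inl ((hM.1 e h).2 v hv)⟩
    · exact ⟨(hN.1 e h).1, fun v hv => Or.inr ((hN.1 e h).2 v hv)⟩
  · rcases Finset.mem_union.1 he with h | h <;> rcases Finset.mem_union.1 hf with h' | h'
    · exact hM.2 e h f h' hef v hve hvf
    · exact Set.disjoint_left.1 hST ((hM.1 e h).2 v hve) ((hN.1 f h').2 v hvf)
    · exact Set.disjoint_left.1 hST ((hM.1 f h').2 v hvf) ((hN.1 e h).2 v hve)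
    · exact hN.2 e h f h' hef v hve hvf

lemma isMatchingOn_empty (S : Set V) : IsMatchingOn G S ∅ := by
  simp [IsMatchingOn]

lemma matching_erase {S : Set V} {v y : V} {M : Finset (Sym2 V)} (hM : IsMatchingOn G S M)
    (hvy : s(v,y) ∈ M) : IsMatchingOn G ((S \ {v}) \ {y}) (M.erase s(v,y)) := by
  refine ⟨fun e he => ?_, fun e he f hf => hM.2 e (Finset.mem_of_mem_erase he) f
    (Finset.mem_of_mem_erase hf)⟩
  obtain ⟨hne, he'⟩ := Finset.mem_erase.1 he
  refine ⟨(hM.1 e he').1, fun a ha => ⟨⟨(hM.1 e he').2 a ha, ?_⟩, ?_⟩⟩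
  · rintro rfl
    exact hM.2 e he' _ hvy hne _ ha (Sym2.mem_mk_left _ _)
  · rintro rfl
    exact hM.2 e he' _ hvy hne _ ha (Sym2.mem_mk_right _ _)

lemma matching_cases {S : Set V} (v : V) {M : Finset (Sym2 V)} (hM : IsMatchingOn G S M) :
    IsMatchingOn G (S \ {v}) M ∨ ∃ y, s(v,y) ∈ M := by
  by_cases h : ∃ y, s(v,y) ∈ M
  · exact Or.inr h
  · refine Or.inl ⟨fun e he => ⟨(hM.1 e he).1, fun a ha => ⟨(hM.1 e he).2 a ha, ?_⟩⟩, hM.2⟩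
    rintro rfl
    obtain ⟨y, rfl⟩ := Sym2.mem_iff_exists.1 ha
    exact h ⟨y, he⟩

lemma mem_adj_of_mem_matching {S : Set V} {v y : V} {M : Finset (Sym2 V)}
    (hM : IsMatchingOn G S M) (h : s(v,y) ∈ M) : v ∈ S ∧ y ∈ S ∧ G.Adj v y :=
  ⟨(hM.1 _ h).2 v (Sym2.mem_mk_left _ _), (hM.1 _ h).2 y (Sym2.mem_mk_right _ _), (hM.1 _ h).1⟩

variable [Fintype V] {w : Sym2 V → ℝ} {x : V → ℝ}

lemma MDweight_eq {S : Set V} {M : Finset (Sym2 V)} {F : Finset V}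
    (hF : ∀ v, v ∈ F ↔ v ∈ S ∧ ∀ e ∈ M, v ∉ e) :
    MDweight w x S M = ∑ e ∈ M, w e + ∑ v ∈ F, x v := by
  unfold MDweight
  congr 2
  ext v
  simp [hF]

/-- Additivity of the weight. Edges between `S` and `T` are irrelevant, since neither matching
uses them. -/
lemma MDweight_union {S T : Set V} (hST : Disjoint S T) {M N : Finset (Sym2 V)}
    (hM : IsMatchingOn G S M) (hN : IsMatchingOn G T N) :
    MDweight w x (S ∪ T) (M ∪ N) = MDweight w x S M + MDweight w x T N := by
  have hd : Disjoint M N := by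
    rw [Finset.disjoint_left]
    intro e h h'
    induction e using Sym2.ind with
    | _ a b =>
      exact Set.disjoint_left.1 hST ((hM.1 _ h).2 a (Sym2.mem_mk_left a b))
        ((hN.1 _ h').2 a (Sym2.mem_mk_left a b))
  obtain ⟨F, hF⟩ : ∃ F : Finset V, ∀ v, v ∈ F ↔ v ∈ S ∧ ∀ e ∈ M, v ∉ e :=
    ⟨Finset.univ.filter fun v => v ∈ S ∧ ∀ e ∈ M, v ∉ e, by simp⟩
  obtain ⟨K, hK⟩ : ∃ K : Finset V, ∀ v, v ∈ K ↔ v ∈ T ∧ ∀ e ∈ N, v ∉ e :=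
    ⟨Finset.univ.filter fun v => v ∈ T ∧ ∀ e ∈ N, v ∉ e, by simp⟩
  have hFK : ∀ v, v ∈ F ∪ K ↔ v ∈ S ∪ T ∧ ∀ e ∈ M ∪ N, v ∉ e := by
    intro v
    simp only [Finset.mem_union, Set.mem_union, hF, hK]
    constructor
    · rintro (⟨h, h'⟩ | ⟨h, h'⟩)
      · refine ⟨Or.inl h, ?_⟩
        rintro e (he | he) hv
        · exact h' e he hv
        · exact Set.disjoint_left.1 hST h ((hN.1 e he).2 v hv)
      · refine ⟨Or.inr h, ?_⟩
        rintro e (he | he) hv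
        · exact Set.disjoint_left.1 hST ((hM.1 e he).2 v hv) h
        · exact h' e he hv
    · rintro ⟨h | h, h'⟩
      · exact Or.inl ⟨h, fun e he => h' e (Or.inl he)⟩
      · exact Or.inr ⟨h, fun e he => h' e (Or.inr he)⟩
  have hfd : Disjoint F K := by
    rw [Finset.disjoint_left]
    intro v h h'
    exact Set.disjoint_left.1 hST ((hF v).1 h).1 ((hK v).1 h').1
  rw [MDweight_eq hF, MDweight_eq hK, MDweight_eq hFK, Finset.sum_union hd, Finset.sum_union hfd]
  ring

lemma finite_weights (S : Set V) :
    {r | ∃ M, IsMatchingOn G S M ∧ MDweight w x S M = r}.Finite := by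
  refine (Set.finite_range (fun M : Finset (Sym2 V) => MDweight w x S M)).subset ?_
  rintro r ⟨M, -, rfl⟩
  exact ⟨M, rfl⟩

lemma weight_le_OPT {S : Set V} {M : Finset (Sym2 V)} (hM : IsMatchingOn G S M) :
    MDweight w x S M ≤ OPT G w x S :=
  le_csSup (finite_weights S).bddAbove ⟨M, hM, rfl⟩

lemma exists_weight_eq_OPT (S : Set V) :
    ∃ M, IsMatchingOn G S M ∧ MDweight w x S M = OPT G w x S :=
  Set.Nonempty.csSup_mem (s := {r | ∃ M, IsMatchingOn G S M ∧ MDweight w x S M = r})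
    ⟨_, ∅, isMatchingOn_empty S, rfl⟩ (finite_weights S)

lemma matching_add_monomer {S : Set V} {v : V} (hv : v ∈ S) {M : Finset (Sym2 V)}
    (hM : IsMatchingOn G (S \ {v}) M) :
    IsMatchingOn G S M ∧ MDweight w x S M = x v + MDweight w x (S \ {v}) M := by
  have hd : Disjoint {v} (S \ {v}) := Set.disjoint_sdiff_right
  have h0 : IsMatchingOn G {v} ∅ := isMatchingOn_empty _
  have h1 := h0.union hd hM
  have h2 := MDweight_union (w := w) (x := x) hd h0 hM
  have hS : {v} ∪ S \ {v} = S := Set.union_sdiff_cancel (Set.singleton_subset_iff.2 hv)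
  rw [hS, Finset.empty_union] at h1 h2
  refine ⟨h1, h2.trans ?_⟩
  rw [MDweight_eq (S := {v}) (F := {v}) (by simp)]
  simp

lemma matching_add_dimer {S : Set V} {v y : V} (hv : v ∈ S) (hy : y ∈ S) (hvy : G.Adj v y)
    {M : Finset (Sym2 V)} (hM : IsMatchingOn G ((S \ {v}) \ {y}) M) :
    IsMatchingOn G S (insert s(v,y) M) ∧
      MDweight w x S (insert s(v,y) M) = w s(v,y) + MDweight w x ((S \ {v}) \ {y}) M := by
  have hS : ({v, y} : Set V) ∪ (S \ {v}) \ {y} = S := by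
    ext a
    simp only [Set.mem_union, Set.mem_insert_iff, Set.mem_singleton_iff, Set.mem_sdiff]
    constructor
    · rintro ((rfl | rfl) | h)
      exacts [hv, hy, h.1.1]
    · tauto
  have hd : Disjoint ({v, y} : Set V) ((S \ {v}) \ {y}) := by
    rw [Set.disjoint_left]
    simp only [Set.mem_insert_iff, Set.mem_singleton_iff, Set.mem_sdiff]
    tauto
  have h0 : IsMatchingOn G ({v, y} : Set V) {s(v,y)} := by
    refine ⟨?_, ?_⟩
    · intro e he
      rw [Finset.mem_singleton] at he
      subst he
      exact ⟨hvy, fun a ha => by simpa using ha⟩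
    · intro e he f hf hef
      rw [Finset.mem_singleton] at he hf
      exact absurd (he.trans hf.symm) hef
  have h1 := h0.union hd hM
  have h2 := MDweight_union (w := w) (x := x) hd h0 hM
  rw [hS, ← Finset.insert_eq] at h1 h2
  refine ⟨h1, h2.trans ?_⟩
  rw [MDweight_eq (S := {v, y}) (F := ∅) (by simp)]
  simp

lemma weight_eq_of_mem {S : Set V} {v y : V} {M : Finset (Sym2 V)}
    (hM : IsMatchingOn G S M) (h : s(v,y) ∈ M) :
    MDweight w x S M = w s(v,y) + MDweight w x ((S \ {v}) \ {y}) (M.erase s(v,y)) := by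
  obtain ⟨hv, hy, hvy⟩ := mem_adj_of_mem_matching hM h
  have := (matching_add_dimer (w := w) (x := x) hv hy hvy (matching_erase hM h)).2
  rwa [Finset.insert_erase h] at this

/-- Conditioning on the status of `v`: the best weight on `S` among matchings avoiding the
edge `uv` is `c + OPT (S \ {v})`, where `c` is the largest gain that `v` brings as a monomer or
as an endpoint of a dimer `vy` with `y ≠ u`. -/
lemma isGreatest_avoiding {S : Set V} {u v : V} (hv : v ∈ S) {c : ℝ} (hx : x v ≤ c)
    (hn : ∀ y ∈ S, G.Adj v y → y ≠ u →
      w s(v,y) + OPT G w x ((S \ {v}) \ {y}) ≤ c + OPT G w x (S \ {v}))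
    (hc : c = x v ∨ ∃ y ∈ S, G.Adj v y ∧ y ≠ u ∧
      w s(v,y) + OPT G w x ((S \ {v}) \ {y}) = c + OPT G w x (S \ {v})) :
    IsGreatest {r | ∃ M, IsMatchingOn G S M ∧ s(u,v) ∉ M ∧ MDweight w x S M = r}
      (c + OPT G w x (S \ {v})) := by
  refine ⟨?_, ?_⟩
  · rcases hc with rfl | ⟨y, hy, hvy, hyu, hc⟩
    · obtain ⟨M, hM, hMw⟩ := exists_weight_eq_OPT (G := G) (w := w) (x := x) (S \ {v})
      obtain ⟨h1, h2⟩ := matching_add_monomer (w := w) (x := x) hv hM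
      refine ⟨M, h1, fun h => ?_, by rw [h2, hMw]⟩
      exact ((hM.1 _ h).2 v (Sym2.mem_mk_right _ _)).2 rfl
    · obtain ⟨M, hM, hMw⟩ := exists_weight_eq_OPT (G := G) (w := w) (x := x) ((S \ {v}) \ {y})
      obtain ⟨h1, h2⟩ := matching_add_dimer (w := w) (x := x) hv hy hvy hM
      refine ⟨_, h1, fun h => ?_, by rw [h2, hMw, hc]⟩
      rcases Finset.mem_insert.1 h with h | h
      · rw [Sym2.eq_swap, Sym2.congr_right] at h
        exact hyu h.symm
      · exact ((hM.1 _ h).2 v (Sym2.mem_mk_right _ _)).1.2 rfl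
  · rintro r ⟨M, hM, huv, rfl⟩
    rcases matching_cases v hM with h | ⟨y, hy⟩
    · rw [(matching_add_monomer (w := w) (x := x) hv h).2]
      exact add_le_add hx (weight_le_OPT h)
    · rw [weight_eq_of_mem hM hy]
      obtain ⟨-, hyS, hvy⟩ := mem_adj_of_mem_matching hM hy
      refine le_trans ?_ (hn y hyS hvy ?_)
      · have := weight_le_OPT (w := w) (x := x) (matching_erase hM hy)
        linarith
      · rintro rfl
        exact huv (Sym2.eq_swap ▸ hy)

/-- The part of a matching of `G` lying inside `B` is optimal on `B` minus the vertices of `B`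
matched to the outside: any competitor can be glued to the remaining dimers. -/
lemma isOptimalOn_restrict {MD : Finset (Sym2 V)} (hMD : IsOptimalOn G w x Set.univ MD)
    (B : Set V) :
    ∃ M, (∀ e, e ∈ M ↔ e ∈ MD ∧ ∀ v ∈ e, v ∈ B) ∧
      IsOptimalOn G w x (B \ {v | v ∈ B ∧ ∃ y, y ∉ B ∧ s(v,y) ∈ MD}) M := by
  set U : Set V := {v | v ∈ B ∧ ∃ y, y ∉ B ∧ s(v,y) ∈ MD} with hU
  have hM0 : IsMatchingOn G (B \ U) (MD.filter (fun e => ∀ v ∈ e, v ∈ B)) := by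
    refine ⟨fun e he => ?_, fun e he f hf => hMD.1.2 e (Finset.mem_filter.1 he).1 f
      (Finset.mem_filter.1 hf).1⟩
    obtain ⟨he, heB⟩ := Finset.mem_filter.1 he
    refine ⟨(hMD.1.1 e he).1, fun v hv => ⟨heB v hv, ?_⟩⟩
    rintro ⟨-, y, hy, hvy⟩
    refine hMD.1.2 e he _ hvy ?_ v hv (Sym2.mem_mk_left _ _)
    rintro rfl
    exact hy (heB y (Sym2.mem_mk_right _ _))
  have hM1 : IsMatchingOn G (B \ U)ᶜ (MD.filter (fun e => ¬ ∀ v ∈ e, v ∈ B)) := by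
    refine ⟨fun e he => ?_, fun e he f hf => hMD.1.2 e (Finset.mem_filter.1 he).1 f
      (Finset.mem_filter.1 hf).1⟩
    obtain ⟨he, heB⟩ := Finset.mem_filter.1 he
    refine ⟨(hMD.1.1 e he).1, fun v hv hvB => heB ?_⟩
    obtain ⟨y, rfl⟩ := Sym2.mem_iff_exists.1 hv
    intro a ha
    rcases Sym2.mem_iff.1 ha with rfl | rfl
    · exact hvB.1
    · by_contra h
      exact hvB.2 ⟨hvB.1, a, h, he⟩
  have hd : Disjoint (B \ U) (B \ U)ᶜ := disjoint_compl_right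
  refine ⟨_, fun e => Finset.mem_filter, hM0, fun M' hM' => ?_⟩
  have h1 := MDweight_union (w := w) (x := x) hd hM0 hM1
  have h2 := MDweight_union (w := w) (x := x) hd hM' hM1
  have h3 := hM'.union hd hM1
  rw [Set.union_compl_self] at h1 h2 h3
  rw [Finset.filter_union_filter_not_eq] at h1
  have h4 := hMD.2 _ h3
  linarith

end Weights

/-! ### Branches of a tree -/

section Branches

variable {V : Type*} {G : SimpleGraph V}

/-- The branch at `v` seen from its neighbour `u` in the induced subgraph on `B`: the vertices
that a walk inside `B` starting at `v` can reach without using the edge `uv`. -/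
def branch (G : SimpleGraph V) (B : Set V) (u v : V) : Set V :=
  {y | Relation.ReflTransGen (fun a b => G.Adj a b ∧ b ∈ B ∧ s(a,b) ≠ s(u,v)) v y}

lemma not_mem_branch {B : Set V} (hac : (G.induce B).IsAcyclic) {u v : V} (huv : G.Adj u v)
    (hu : u ∈ B) (hv : v ∈ B) : u ∉ branch G B u v := by
  intro h
  have hb : (G.induce B).IsBridge s(⟨u, hu⟩, ⟨v, hv⟩) :=
    SimpleGraph.isAcyclic_iff_forall_adj_isBridge.1 hac (by simpa using huv)
  rw [SimpleGraph.isBridge_iff] at hb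
  have key : ∀ y, y ∈ branch G B u v → ∃ hy : y ∈ B,
      ((G.induce B).deleteEdges {s(⟨u, hu⟩, ⟨v, hv⟩)}).Reachable ⟨v, hv⟩ ⟨y, hy⟩ := by
    intro y hy
    induction hy with
    | refl => exact ⟨hv, SimpleGraph.Reachable.refl _⟩
    | tail _ hbc ih =>
      obtain ⟨hbB, hr⟩ := ih
      refine ⟨hbc.2.1, hr.trans (SimpleGraph.Adj.reachable ?_)⟩
      rw [SimpleGraph.deleteEdges_adj]
      refine ⟨by simpa using hbc.1, fun hh => hbc.2.2 ?_⟩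
      simpa [Subtype.ext_iff] using hh
  obtain ⟨hy, hr⟩ := key u h
  exact hb hr.symm

lemma branch_subset {B : Set V} (hac : (G.induce B).IsAcyclic) {u v y : V}
    (hv : v ∈ B) (hvy : G.Adj v y) (hy : y ∈ B) (hyu : y ≠ u) :
    branch G B v y ⊆ branch G B u v := by
  intro z hz
  induction hz with
  | refl =>
    refine Relation.ReflTransGen.single ⟨hvy, hy, fun h => ?_⟩
    rw [Sym2.eq_swap, Sym2.congr_left] at h
    exact hyu h
  | @tail b c hb hbc ih =>
    refine Relation.ReflTransGen.tail ih ⟨hbc.1, hbc.2.1, fun h => ?_⟩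
    -- using the edge `uv` would put `v` on the branch at `y` seen from `v`
    have hvb : v ∈ s(b,c) := h ▸ Sym2.mem_mk_right _ _
    refine not_mem_branch hac hvy hv hy ?_
    rcases Sym2.mem_iff.1 hvb with rfl | rfl
    · exact hb
    · exact Relation.ReflTransGen.tail hb hbc

/-- A vertex on the sphere of radius `H` is a leaf of the ball of radius `H`, if that ball is
a tree: two neighbours `u`, `y` of `v` in the ball would be joined through `o` by geodesics
missing `v`. -/
lemma eq_of_adj_sphere {o : V} {H : ℕ} {B : Set V}
    (hB : B = {v | G.Reachable o v ∧ G.dist o v ≤ H}) (hac : (G.induce B).IsAcyclic)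
    {u v y : V} (hvH : G.dist o v = H) (huv : G.Adj u v) (hu : u ∈ B) (hv : v ∈ B)
    (hvy : G.Adj v y) (hy : y ∈ B) : y = u := by
  by_contra hyu
  have hoB : o ∈ B := by rw [hB]; exact ⟨SimpleGraph.Reachable.refl _, by simp⟩
  set R : V → V → Prop := fun a b => G.Adj a b ∧ b ∈ B ∧ s(a,b) ≠ s(u,v) with hR
  -- a geodesic from `o` to another vertex of the ball misses `v`; both orientations are recorded
  have key : ∀ n, ∀ z ∈ B, z ≠ v → G.dist o z = n →
      Relation.ReflTransGen R o z ∧ Relation.ReflTransGen R z o := by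
    intro n
    induction n with
    | zero =>
      intro z hz _ h0
      rw [hB] at hz
      rw [hz.1.dist_eq_zero_iff] at h0
      subst h0
      exact ⟨.refl, .refl⟩
    | succ n ih =>
      intro z hz hzv hn
      have hz' := hz
      rw [hB] at hz'
      obtain ⟨p, hp⟩ := hz'.1.symm.exists_walk_length_eq_dist
      rw [SimpleGraph.dist_comm, hn] at hp
      cases p with
      | nil => simp at hp
      | @cons _ a _ hza q =>
        rw [SimpleGraph.Walk.length_cons] at hp
        have hoa : G.Reachable o a := q.reachable.symm
        have h1 : G.dist o a ≤ n := by
          rw [SimpleGraph.dist_comm]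
          exact (SimpleGraph.dist_le q).trans (by omega)
        have h2 : G.dist o z ≤ G.dist o a + 1 := by
          obtain ⟨r, hr⟩ := hoa.exists_walk_length_eq_dist
          refine (SimpleGraph.dist_le (r.concat hza.symm)).trans ?_
          rw [SimpleGraph.Walk.length_concat, hr]
        have haB : a ∈ B := by
          rw [hB]; exact ⟨hoa, by have := hz'.2; omega⟩
        have hav : a ≠ v := by
          rintro rfl
          have := hz'.2
          omega
        obtain ⟨i1, i2⟩ := ih a haB hav (by omega)
        refine ⟨i1.tail ⟨hza.symm, hz, fun h => ?_⟩, i2.head ⟨hza, haB, fun h => ?_⟩⟩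
        · have : v ∈ s(a,z) := h ▸ Sym2.mem_mk_right _ _
          rcases Sym2.mem_iff.1 this with h | h
          · exact hav h.symm
          · exact hzv h.symm
        · have : v ∈ s(z,a) := h ▸ Sym2.mem_mk_right _ _
          rcases Sym2.mem_iff.1 this with h | h
          · exact hzv h.symm
          · exact hav h.symm
  refine not_mem_branch hac huv hu hv ?_
  have hs : R v y := ⟨hvy, hy, fun h => by
    rw [Sym2.eq_swap, Sym2.congr_left] at h
    exact hyu h⟩
  exact (Relation.ReflTransGen.single hs).trans
    ((key _ y hy hvy.ne' rfl).2.trans (key _ u hu huv.ne rfl).1)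

end Branches

/-! ### Messages as differences of optima -/

section Messages

variable {V : Type*} [Fintype V] {G : SimpleGraph V} {w : Sym2 V → ℝ} {x : V → ℝ}

/-- One step of the message recursion. If the messages sent to `v` by its neighbours other than
`u` are the gains `OPT (S \ {v}) - OPT (S \ {v, y})`, then `Z u v` is the gain of adding `v` to
`S \ {v}` with the edge `uv` forbidden. -/
lemma message_step {B U S : Set V} {Z : V → V → EReal} {u v : V} (hS : S ⊆ B \ U) (hv : v ∈ S)
    (hZ : Z u v = max ((x v : ℝ) : EReal)
        (sSup {r : EReal | ∃ u', G.Adj v u' ∧ u' ∈ B ∧ u' ≠ u ∧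
          r = ((w s(v,u') : ℝ) : EReal) - Z v u'}))
    (hZU : ∀ y ∈ U, G.Adj v y → Z v y = ⊤)
    (hnb : ∀ y, G.Adj v y → y ∈ B \ U → y ≠ u → y ∈ S)
    (hmsg : ∀ y, G.Adj v y → y ∈ B \ U → y ≠ u →
      Z v y = ((OPT G w x (S \ {v}) - OPT G w x ((S \ {v}) \ {y}) : ℝ) : EReal)) :
    ∃ c : ℝ, Z u v = c ∧
      IsGreatest {r | ∃ M, IsMatchingOn G S M ∧ s(u,v) ∉ M ∧ MDweight w x S M = r}
        (c + OPT G w x (S \ {v})) := by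
  set A : Set EReal := {r : EReal | ∃ u', G.Adj v u' ∧ u' ∈ B ∧ u' ≠ u ∧
          r = ((w s(v,u') : ℝ) : EReal) - Z v u'} with hA
  have hAfin : A.Finite := by
    refine (Set.finite_range (fun u' => ((w s(v,u') : ℝ) : EReal) - Z v u')).subset ?_
    rintro r ⟨y, -, -, -, rfl⟩
    exact ⟨y, rfl⟩
  have hle : ∀ y ∈ S, G.Adj v y → y ≠ u →
      ((w s(v,y) - (OPT G w x (S \ {v}) - OPT G w x ((S \ {v}) \ {y})) : ℝ) : EReal) ≤ Z u v := by
    intro y hy hvy hyu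
    rw [hZ]
    refine le_max_of_le_right (le_sSup ⟨y, hvy, (hS hy).1, hyu, ?_⟩)
    rw [hmsg y hvy (hS hy) hyu, ← EReal.coe_sub]
  have hxle : ((x v : ℝ) : EReal) ≤ Z u v := hZ ▸ le_max_left _ _
  have hatt : Z u v = x v ∨ ∃ y ∈ S, G.Adj v y ∧ y ≠ u ∧ Z u v =
      ((w s(v,y) - (OPT G w x (S \ {v}) - OPT G w x ((S \ {v}) \ {y})) : ℝ) : EReal) := by
    rcases le_total (sSup A) ((x v : ℝ) : EReal) with h | h
    · exact Or.inl (hZ.trans (max_eq_left h))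
    · rw [max_eq_right h] at hZ
      rcases A.eq_empty_or_nonempty with hA0 | hA0
      · rw [hA0, sSup_empty, le_bot_iff] at h
        exact absurd h (EReal.coe_ne_bot _)
      · obtain ⟨y, hvy, hyB, hyu, hr⟩ := hA0.csSup_mem hAfin
        have hyU : y ∉ U := by
          intro hyU
          rw [hr, hZU y hyU hvy, EReal.sub_top, le_bot_iff] at h
          exact EReal.coe_ne_bot _ h
        refine Or.inr ⟨y, hnb y hvy ⟨hyB, hyU⟩ hyu, hvy, hyu, ?_⟩
        rw [hZ, hr, hmsg y hvy ⟨hyB, hyU⟩ hyu, ← EReal.coe_sub]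
  obtain ⟨c, hc⟩ : ∃ c : ℝ, Z u v = c := by
    rcases hatt with h | ⟨y, -, -, -, h⟩
    exacts [⟨_, h⟩, ⟨_, h⟩]
  refine ⟨c, hc, ?_⟩
  rw [hc] at hle hxle hatt
  refine isGreatest_avoiding hv (EReal.coe_le_coe_iff.1 hxle) ?_ ?_
  · intro y hy hvy hyu
    have := EReal.coe_le_coe_iff.1 (hle y hy hvy hyu)
    linarith
  · rcases hatt with h | ⟨y, hy, hvy, hyu, h⟩
    · exact Or.inl (EReal.coe_eq_coe_iff.1 h)
    · refine Or.inr ⟨y, hy, hvy, hyu, ?_⟩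
      have := EReal.coe_eq_coe_iff.1 h
      linarith

/-- The message `Z u v` is the gain of adding `v` to `S \ {v}`, for every `S` not containing `u`
that contains the branch at `v` seen from `u`. Leaving `S` this free makes the induction on the
size of the branch close without splitting optima over connected components: the messages
entering `v` are gains with respect to `S \ {v}`. -/
lemma message_eq {B U : Set V} {Z : V → V → EReal} (hac : (G.induce B).IsAcyclic)
    (hZ : ∀ u v, G.Adj u v → u ∈ B → v ∈ B \ U → Z u v = max ((x v : ℝ) : EReal)
        (sSup {r : EReal | ∃ u', G.Adj v u' ∧ u' ∈ B ∧ u' ≠ u ∧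
          r = ((w s(v,u') : ℝ) : EReal) - Z v u'}))
    (hZU : ∀ u v, G.Adj u v → u ∈ B → v ∈ U → Z u v = ⊤) :
    ∀ n, ∀ u v, (branch G B u v).ncard = n → G.Adj u v → u ∈ B → v ∈ B \ U →
      ∀ S ⊆ B \ U, u ∉ S → (∀ y ∈ B \ U, y ∈ branch G B u v → y ∈ S) →
      Z u v = ((OPT G w x S - OPT G w x (S \ {v}) : ℝ) : EReal) := by
  intro n
  induction n using Nat.strong_induction_on with
  | _ n ih =>
  intro u v hn huv hu hv S hS huS hbr
  have hvS : v ∈ S := hbr v hv .refl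
  obtain ⟨c, hc, hg⟩ := message_step hS hvS (hZ u v huv hu hv)
    (fun y hy hvy => hZU v y hvy hv.1 hy)
    (fun y hvy hy hyu => hbr y hy (branch_subset hac hv.1 hvy hy.1 hyu .refl))
    (fun y hvy hy hyu => by
      have hss := branch_subset hac hv.1 hvy hy.1 hyu
      have hnv := not_mem_branch hac hvy hv.1 hy.1
      refine ih _ ?_ v y rfl hvy hv.1 hy (S \ {v}) (Set.sdiff_subset.trans hS) (by simp) ?_
      · rw [← hn]
        refine Set.ncard_lt_ncard ⟨hss, fun h => hnv (h ?_)⟩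
        exact .refl
      · intro z hz hzb
        refine ⟨hbr z hz (hss hzb), ?_⟩
        rintro rfl
        exact hnv hzb)
  have hopt : OPT G w x S = c + OPT G w x (S \ {v}) := by
    obtain ⟨M, hM, -, hMw⟩ := hg.1
    refine le_antisymm ?_ (hMw ▸ weight_le_OPT hM)
    obtain ⟨M, hM, hMw⟩ := exists_weight_eq_OPT (G := G) (w := w) (x := x) S
    refine hg.2 ⟨M, hM, fun h => huS ?_, hMw⟩
    exact (mem_adj_of_mem_matching hM h).1
  rw [hc, hopt, add_sub_cancel_right]

end Messages

/-- Let `(G,w,x)` be a finite weighted graph, `o` a vertex and `H ≥ 1` such that the ball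
`B_H(G,o)` (induced on vertices at distance at most `H` from `o`) is a tree. Let `MD` be an
optimal monomer-dimer configuration of `(G,w,x)`, and assume that for every subset `U` of the
vertices at distance exactly `H` from `o`, the ball minus `U` has a unique optimal
monomer-dimer configuration. If `Z` (with values in `ℝ ∪ {+∞} ⊆ EReal`) satisfies the
boundary conditions (i) and the message recursion (ii), then an edge `{u,v}` of the ball is
a dimer of `MD` iff `w(u,v) > Z(u,v) + Z(v,u)` (in `EReal`, so the inequality fails whenever
the right-hand side is `+∞`). -/
theorem stmt5 {V : Type*} [Fintype V] (G : SimpleGraph V) (w : Sym2 V → ℝ) (x : V → ℝ)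
    (o : V) (H : ℕ) (hH : 1 ≤ H)
    (B : Set V) (hB : B = {v | G.Reachable o v ∧ G.dist o v ≤ H})
    (htree : (G.induce B).IsTree)
    (MD : Finset (Sym2 V)) (hMD : IsOptimalOn G w x Set.univ MD)
    (huniq : ∀ U : Set V, U ⊆ {v | G.Reachable o v ∧ G.dist o v = H} →
      ∃! M : Finset (Sym2 V), IsOptimalOn G w x (B \ U) M)
    (Z : V → V → EReal)
    (hZbd : ∀ u v, G.Adj u v → u ∈ B → v ∈ B → G.dist o v = H →
      Z u v = if ∃ y, y ∉ B ∧ s(v,y) ∈ MD then (⊤ : EReal) else ((x v : ℝ) : EReal))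
    (hZrec : ∀ u v, G.Adj u v → u ∈ B → v ∈ B → G.dist o v < H →
      Z u v = max ((x v : ℝ) : EReal)
        (sSup {r : EReal | ∃ u', G.Adj v u' ∧ u' ∈ B ∧ u' ≠ u ∧
          r = ((w s(v,u') : ℝ) : EReal) - Z v u'})) :
    ∀ u v, G.Adj u v → u ∈ B → v ∈ B →
      (s(u,v) ∈ MD ↔ ((w s(u,v) : ℝ) : EReal) > Z u v + Z v u) := by
  subst_vars
  set B : Set V := {v | G.Reachable o v ∧ G.dist o v ≤ H} with hB
  have hac := htree.isAcyclic
  set U : Set V := {v | v ∈ B ∧ ∃ y, y ∉ B ∧ s(v,y) ∈ MD} with hU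
  have hUH : U ⊆ {v | G.Reachable o v ∧ G.dist o v = H} := by
    rintro v ⟨hv, y, hy, hvy⟩
    refine ⟨hv.1, le_antisymm hv.2 ?_⟩
    by_contra hlt
    have hadj : G.Adj v y := (hMD.1.1 _ hvy).1
    obtain ⟨p, hp⟩ := hv.1.exists_walk_length_eq_dist
    refine hy ⟨hv.1.trans hadj.reachable, (SimpleGraph.dist_le (p.concat hadj)).trans ?_⟩
    rw [SimpleGraph.Walk.length_concat, hp]
    omega
  have hZU : ∀ u v, G.Adj u v → u ∈ B → v ∈ U → Z u v = ⊤ := by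
    intro u v huv hu hv
    rw [hZbd u v huv hu hv.1 (hUH hv).2, if_pos hv.2]
  -- the recursion also holds on the sphere off `U`, where the supremum is over the empty set
  have hZ : ∀ u v, G.Adj u v → u ∈ B → v ∈ B \ U → Z u v = max ((x v : ℝ) : EReal)
        (sSup {r : EReal | ∃ u', G.Adj v u' ∧ u' ∈ B ∧ u' ≠ u ∧
          r = ((w s(v,u') : ℝ) : EReal) - Z v u'}) := by
    intro u v huv hu hv
    rcases lt_or_eq_of_le hv.1.2 with hlt | heq
    · exact hZrec u v huv hu hv.1 hlt
    · have hempty : {r : EReal | ∃ u', G.Adj v u' ∧ u' ∈ B ∧ u' ≠ u ∧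
          r = ((w s(v,u') : ℝ) : EReal) - Z v u'} = ∅ := by
        rw [Set.eq_empty_iff_forall_notMem]
        rintro r ⟨y, hvy, hy, hyu, -⟩
        exact hyu (eq_of_adj_sphere hB hac heq huv hu hv.1 hvy hy)
      rw [hempty, sSup_empty, max_eq_left bot_le, hZbd u v huv hu hv.1 heq, if_neg]
      exact fun h => hv.2 ⟨hv.1, h⟩
  have hZbot : ∀ u v, G.Adj u v → u ∈ B → v ∈ B → Z u v ≠ ⊥ := by
    intro u v huv hu hv
    by_cases hvU : v ∈ U
    · rw [hZU u v huv hu hvU]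
      exact top_ne_bot
    · rw [hZ u v huv hu ⟨hv, hvU⟩]
      exact (lt_max_of_lt_left (EReal.bot_lt_coe _)).ne'
  have hUMD : ∀ u v, u ∈ B → v ∈ U → s(u,v) ∉ MD := by
    rintro u v hu ⟨-, y, hy, hvy⟩ h
    refine hMD.1.2 _ h _ hvy (fun he => ?_) v (Sym2.mem_mk_right _ _) (Sym2.mem_mk_left _ _)
    rw [Sym2.eq_swap, Sym2.congr_right] at he
    exact hy (he ▸ hu)
  intro u v huv hu hv
  by_cases hvU : v ∈ U
  · refine iff_of_false (hUMD u v hu hvU) ?_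
    rw [hZU u v huv hu hvU, EReal.top_add_of_ne_bot (hZbot v u huv.symm hv hu)]
    exact not_top_lt
  by_cases huU : u ∈ U
  · refine iff_of_false (fun h => hUMD v u hv huU (Sym2.eq_swap ▸ h)) ?_
    rw [hZU v u huv.symm hv huU, EReal.add_top_of_ne_bot (hZbot u v huv hu hv)]
    exact not_top_lt
  have hvB : v ∈ B \ U := ⟨hv, hvU⟩
  have huB : u ∈ B \ U := ⟨hu, huU⟩
  have hmsg : ∀ y, G.Adj v y → y ∈ B \ U → Z v y =
      ((OPT G w x ((B \ U) \ {v}) - OPT G w x (((B \ U) \ {v}) \ {y}) : ℝ) : EReal) := by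
    intro y hvy hy
    refine message_eq hac hZ hZU _ v y rfl hvy hv hy _ Set.sdiff_subset (by simp) ?_
    intro z hz hzb
    refine ⟨hz, ?_⟩
    rintro rfl
    exact not_mem_branch hac hvy hv hy.1 hzb
  obtain ⟨c, hc, hg⟩ := message_step (S := B \ U) subset_rfl hvB (hZ u v huv hu hvB)
    (fun y hy hvy => hZU v y hvy hv hy) (fun y _ hy _ => hy) (fun y hvy hy _ => hmsg y hvy hy)
  rw [hc, hmsg u huv.symm huB, ← EReal.coe_add, gt_iff_lt, EReal.coe_lt_coe_iff]
  obtain ⟨M0, hM0, hopt⟩ := isOptimalOn_restrict hMD B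
  rw [← hU] at hopt
  have hmem : s(u,v) ∈ MD ↔ s(v,u) ∈ M0 := by
    rw [hM0, Sym2.eq_swap]
    refine ⟨fun h => ⟨h, fun a ha => ?_⟩, fun h => h.1⟩
    rcases Sym2.mem_iff.1 ha with rfl | rfl
    exacts [hv, hu]
  have hsw : s(u,v) = s(v,u) := Sym2.eq_swap
  rw [hmem]
  rw [hsw] at hg ⊢
  constructor
  · intro h
    have h1 := weight_eq_of_mem (w := w) (x := x) hopt.1 h
    have h2 := weight_le_OPT (w := w) (x := x) (matching_erase hopt.1 h)
    -- by uniqueness, the best matching avoiding `uv` is strictly worse than `M0`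
    obtain ⟨N, hN, hNuv, hNw⟩ := hg.1
    have h3 : MDweight w x (B \ U) N < MDweight w x (B \ U) M0 := by
      by_contra hle
      push Not at hle
      have hNopt : IsOptimalOn G w x (B \ U) N := ⟨hN, fun M' hM' => (hopt.2 M' hM').trans hle⟩
      exact hNuv ((huniq U hUH).unique hNopt hopt ▸ h)
    linarith
  · intro h
    by_contra hn
    have h1 := hg.2 ⟨M0, hopt.1, hn, rfl⟩
    obtain ⟨N, hN, hNw⟩ :=
      exists_weight_eq_OPT (G := G) (w := w) (x := x) (((B \ U) \ {v}) \ {u})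
    obtain ⟨h2, h3⟩ := matching_add_dimer (w := w) (x := x) hvB huB huv.symm hN
    have h4 := hopt.2 _ h2
    linarith
end

section
/- Let m ∈ ℝ. Let ξ be an atomless probability measure on ℝ with cumulative distribution function h_X satisfying ξ((−∞,m)) = 0 and h_X(t) > 0 for every t > m. Let ω be an atomless probability measure on ℝ. Let π̂ be a probability measure on ℕ₀ with finite mean and π̂({0}) < 1, with probability generating function φ̂. Suppose h_+ and h_- are cumulative distribution functions of probability measures on ℝ such that h_+(t) ≤ h_-(t) for all t ∈ ℝ and, for all t ∈ ℝ, h_+(t) = h_X(t) · φ̂( 1 − ∫ h_-(w − t) dω(w) ) and h_-(t) = h_X(t) · φ̂( 1 − ∫ h_+(w − t) dω(w) ). Then h_+ = h_-. -/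
open MeasureTheory

/-!
Write `F` for the cdf of `ξ`, `K₊`, `K₋` for the cdfs of `W - Z₊`, `W - Z₋` with `W ∼ ω`, `Z₊ ∼ ζp`,
`Z₋ ∼ ζm` independent, and `φ` for the generating function. As `ω` has no atoms, the system reads
`h₊ = F · φ(K₋)`, `h₋ = F · φ(K₊)`, where `K₋ ≤ K₊` and all functions are continuous.

*Energy identity.* Integrating `h₊ = F · φ(K₋)` against the law of `W - Z₋`, using Fubini and the
fact that `K₋` pushes that law to Lebesgue measure on `[0, 1]`, gives
`P(Z₊ + Z₋ ≤ W) = ∫ (∫_{K₋(x)}^1 φ) dξ(x)` (`energy`). The other equation gives the same with `K₊`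
in place of `K₋`, and the left side is the same (`pair_symm`). Since `K₋ ≤ K₊` and `φ > 0` on
`(0, 1]`, it follows that `K₋ = K₊`, hence `h₊ = h₋`, holds `ξ`-almost everywhere
(`ae_eq_of_system`).

*Beyond the support of `ξ`.* Let `D = h₋ - h₊ ≥ 0`, which vanishes on `(-∞, m]`. For `t > m`,
`D(t) = 0` iff `K₋(t) = K₊(t)` iff `∫ D(w - t) dω(w) = 0` iff `D(w - t) = 0` for all `w` in the
support of `ω`. Suppose `D(t) > 0`. As `ξ` charges `(m, t]`, there is a last zero `a > m` of `D`
before `t`. Some `w` in the support has `D(w - t) > 0`, and then `D(w - a) = 0` and `D > 0` on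
`[w - t, w - a)`. Since `ω` has no atoms, there is a second such point `w'` close to `w`,
and for `|w - w'| < t - a` the two conclusions contradict each other (`uniqueness`).
-/

/-! ### Distribution functions of atomless laws -/

lemma continuous_real_Iic (μ : Measure ℝ) [IsProbabilityMeasure μ] (h : ∀ r, μ {r} = 0) :
    Continuous fun t => μ.real (Set.Iic t) := by
  have he : (fun t => μ.real (Set.Iic t)) = ProbabilityTheory.cdf μ := by
    ext t; rw [ProbabilityTheory.cdf_eq_real]
  rw [he, continuous_iff_continuousAt]
  intro x
  rw [(ProbabilityTheory.monotone_cdf μ).continuousAt_iff_leftLim_eq_rightLim,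
    StieltjesFunction.rightLim_eq]
  have h1 := (ProbabilityTheory.cdf μ).measure_singleton x
  rw [ProbabilityTheory.measure_cdf, h x, eq_comm, ENNReal.ofReal_eq_zero] at h1
  exact le_antisymm ((ProbabilityTheory.monotone_cdf μ).leftLim_le le_rfl) (by linarith)

/-- Probability integral transform: an atomless law is pushed to the uniform law on `[0, 1]` by its
own cdf. -/
lemma map_real_Iic (κ : Measure ℝ) [IsProbabilityMeasure κ] (h : ∀ r, κ {r} = 0) :
    κ.map (fun t => κ.real (Set.Iic t)) = volume.restrict (Set.Icc 0 1) := by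
  have hc := continuous_real_Iic κ h
  have hmono : Monotone fun t => κ.real (Set.Iic t) := fun a b hab =>
    measureReal_mono (Set.Iic_subset_Iic.2 hab)
  have hbot : Filter.Tendsto (fun t => κ.real (Set.Iic t)) Filter.atBot (nhds 0) := by
    simp_rw [← ProbabilityTheory.cdf_eq_real]
    exact ProbabilityTheory.tendsto_cdf_atBot κ
  have htop : Filter.Tendsto (fun t => κ.real (Set.Iic t)) Filter.atTop (nhds 1) := by
    simp_rw [← ProbabilityTheory.cdf_eq_real]
    exact ProbabilityTheory.tendsto_cdf_atTop κ
  have hmeas := hc.measurable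
  have : IsProbabilityMeasure (κ.map (fun t => κ.real (Set.Iic t))) :=
    Measure.isProbabilityMeasure_map hmeas.aemeasurable
  -- for `s ∈ (0, 1)` the sublevel set of the cdf is `Iic Y`, where the cdf at `Y` equals `s`
  have key : ∀ s, 0 < s → s < 1 →
      κ ((fun t => κ.real (Set.Iic t)) ⁻¹' Set.Iic s) = ENNReal.ofReal s := by
    intro s h0 h1
    obtain ⟨a, ha⟩ := (hbot.eventually (gt_mem_nhds h0)).exists
    obtain ⟨b, hb⟩ := (htop.eventually (lt_mem_nhds h1)).exists
    set S : Set ℝ := (fun t => κ.real (Set.Iic t)) ⁻¹' Set.Iic s with hS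
    have hne : S.Nonempty := ⟨a, le_of_lt ha⟩
    have hbdd : BddAbove S := ⟨b, fun y hy => by
      by_contra hlt
      exact absurd (hmono (not_le.1 hlt).le) (not_le.2 (lt_of_le_of_lt hy hb))⟩
    have hclosed : IsClosed S := isClosed_Iic.preimage hc
    have hY : sSup S ∈ S := hclosed.csSup_mem hne hbdd
    have hSe : S = Set.Iic (sSup S) := by
      ext y
      exact ⟨fun hy => le_csSup hbdd hy, fun hy => le_trans (hmono hy) hY⟩
    have hval : κ.real (Set.Iic (sSup S)) = s := by
      refine le_antisymm hY ?_
      refine ge_of_tendsto (hc.continuousAt.tendsto.mono_left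
        (nhdsWithin_le_nhds (s := Set.Ioi (sSup S)))) ?_
      filter_upwards [self_mem_nhdsWithin] with y hy
      by_contra hlt
      exact absurd (le_csSup hbdd (show y ∈ S from (not_le.1 hlt).le)) (not_le.2 hy)
    rw [hSe, ← hval, ofReal_measureReal]
  refine Measure.ext_of_Iic _ _ fun s => ?_
  rw [Measure.map_apply hmeas measurableSet_Iic, Measure.restrict_apply measurableSet_Iic]
  rcases lt_or_ge s 1 with h1 | h1
  · rcases lt_or_ge 0 s with h0 | h0
    · rw [key s h0 h1]
      have : Set.Iic s ∩ Set.Icc 0 1 = Set.Icc 0 s := by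
        ext x; simp only [Set.mem_inter_iff, Set.mem_Iic, Set.mem_Icc]
        constructor
        · rintro ⟨a, b, c⟩; exact ⟨b, a⟩
        · rintro ⟨a, b⟩; exact ⟨b, a, by linarith⟩
      rw [this, Real.volume_Icc, sub_zero]
    · have hz : volume (Set.Iic s ∩ Set.Icc (0:ℝ) 1) = 0 := by
        refine measure_mono_null (t := {0}) ?_ (by simp)
        rintro x ⟨hx, hx0, -⟩
        exact le_antisymm (le_trans hx h0) hx0
      rw [hz]
      refine le_antisymm (le_of_forall_gt fun c hc' => ?_) bot_le
      obtain ⟨e, he0, hec⟩ := ENNReal.lt_iff_exists_nnreal_btwn.1 hc'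
      have he : (0:ℝ) < min (e:ℝ) (1/2) := lt_min (by simpa using he0) (by norm_num)
      have h2 := key (min (e:ℝ) (1/2)) he (lt_of_le_of_lt (min_le_right _ _) (by norm_num))
      refine lt_of_le_of_lt (measure_mono (Set.preimage_mono
        (Set.Iic_subset_Iic.2 (h0.trans he.le)))) ?_
      rw [h2]
      refine lt_of_le_of_lt (ENNReal.ofReal_le_ofReal (min_le_left _ _)) ?_
      simpa using hec
  · have e1 : (fun t => κ.real (Set.Iic t)) ⁻¹' Set.Iic s = Set.univ := by
      ext x; simp only [Set.mem_preimage, Set.mem_Iic, Set.mem_univ, iff_true]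
      exact le_trans measureReal_le_one h1
    have e2 : Set.Iic s ∩ Set.Icc (0:ℝ) 1 = Set.Icc 0 1 :=
      Set.inter_eq_right.2 fun x hx => le_trans hx.2 h1
    rw [e1, e2]; simp

/-- The substitution `s = K(y)` in an integral against the atomless law with cdf `K`. -/
lemma setLIntegral_Ici_comp (κ : Measure ℝ) [IsProbabilityMeasure κ] (h : ∀ r, κ {r} = 0)
    (f : ℝ → ENNReal) (hf : Measurable f) (x : ℝ) :
    ∫⁻ y in Set.Ici x, f (κ.real (Set.Iic y)) ∂κ =
      ∫⁻ s in Set.Ioc (κ.real (Set.Iic x)) 1, f s := by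
  have hmeas : Measurable fun t => κ.real (Set.Iic t) := (continuous_real_Iic κ h).measurable
  have hmap := map_real_Iic κ h
  have hmono : Monotone fun t => κ.real (Set.Iic t) := fun a b hab =>
    measureReal_mono (Set.Iic_subset_Iic.2 hab)
  set K := fun t => κ.real (Set.Iic t) with hK
  -- `K` may be constant on an interval to the left or right of `x`, but such a level set is null
  have hnull : κ (K ⁻¹' {K x}) = 0 := by
    rw [← Measure.map_apply hmeas (measurableSet_singleton _), hmap]
    exact le_antisymm ((Measure.restrict_apply_le _ _).trans (by simp)) bot_le
  have hset : Set.Ici x =ᵐ[κ] K ⁻¹' Set.Ioi (K x) := by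
    have : ∀ᵐ y ∂κ, K y ≠ K x := by
      rw [ae_iff]; simpa [Set.preimage] using hnull
    filter_upwards [this] with y hy
    refine propext ⟨fun hxy => lt_of_le_of_ne (hmono hxy) hy.symm, fun hlt => ?_⟩
    by_contra hxy
    exact absurd (hmono (not_le.1 hxy).le) (not_le.2 hlt)
  rw [setLIntegral_congr hset]
  change ∫⁻ y in K ⁻¹' Set.Ioi (K x), f (K y) ∂κ = _
  rw [← setLIntegral_map measurableSet_Ioi hf hmeas, hmap,
    Measure.restrict_restrict measurableSet_Ioi]
  congr 2
  ext s
  have : 0 ≤ K x := measureReal_nonneg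
  simp only [Set.mem_inter_iff, Set.mem_Ioi, Set.mem_Icc, Set.mem_Ioc]
  constructor
  · rintro ⟨a, b, c⟩; exact ⟨a, c⟩
  · rintro ⟨a, b⟩; exact ⟨a, by linarith, b⟩

/-! ### The law of `W - Z` and the energy identity -/

/-- The law of `W - Z` for independent `W ∼ ω` and `Z ∼ ζ`. -/
noncomputable def diffLaw (ω ζ : Measure ℝ) : Measure ℝ :=
  (ω.prod ζ).map fun p => p.1 - p.2

instance (ω ζ : Measure ℝ) [IsProbabilityMeasure ω] [IsProbabilityMeasure ζ] :
    IsProbabilityMeasure (diffLaw ω ζ) :=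
  Measure.isProbabilityMeasure_map (by fun_prop)

lemma measurable_Iic_sub (ζ : Measure ℝ) (t : ℝ) : Measurable fun v => ζ (Set.Iic (v - t)) := by
  have : Monotone fun v => ζ (Set.Iic (v - t)) := fun a b hab =>
    measure_mono (Set.Iic_subset_Iic.2 (by linarith))
  exact this.measurable

lemma diffLaw_singleton (ω ζ : Measure ℝ) [IsProbabilityMeasure ω] [IsProbabilityMeasure ζ]
    (hω : ∀ r, ω {r} = 0) (r : ℝ) : diffLaw ω ζ {r} = 0 := by
  have hm : Measurable fun p : ℝ × ℝ => p.1 - p.2 := by fun_prop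
  rw [diffLaw, Measure.map_apply hm (measurableSet_singleton r),
    Measure.prod_apply_symm (hm (measurableSet_singleton r)), lintegral_eq_zero_iff']
  · refine Filter.Eventually.of_forall fun z => ?_
    refine measure_mono_null (t := {r + z}) ?_ (hω _)
    intro w hw
    simp only [Set.mem_preimage, Set.mem_singleton_iff] at hw ⊢
    linarith
  · exact (measurable_measure_prodMk_right (hm (measurableSet_singleton r))).aemeasurable

lemma diffLaw_Iic (ω ζ : Measure ℝ) [IsProbabilityMeasure ω] [IsProbabilityMeasure ζ]
    (hω : ∀ r, ω {r} = 0) (t : ℝ) :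
    (diffLaw ω ζ).real (Set.Iic t) = 1 - ∫ v, ζ.real (Set.Iic (v - t)) ∂ω := by
  have hm : Measurable fun p : ℝ × ℝ => p.1 - p.2 := by fun_prop
  have h1 : (diffLaw ω ζ) (Set.Ici t) = ∫⁻ v, ζ (Set.Iic (v - t)) ∂ω := by
    rw [diffLaw, Measure.map_apply hm measurableSet_Ici,
      Measure.prod_apply (hm measurableSet_Ici)]
    refine lintegral_congr fun w => ?_
    congr 1
    ext z
    simp only [Set.mem_preimage, Set.mem_Ici, Set.mem_Iic]
    constructor <;> intro h <;> linarith
  have h2 : ∫ v, ζ.real (Set.Iic (v - t)) ∂ω = (diffLaw ω ζ).real (Set.Ici t) := by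
    rw [measureReal_def, h1, ← integral_toReal (measurable_Iic_sub ζ t).aemeasurable
      (Filter.Eventually.of_forall fun v => measure_lt_top _ _)]
    rfl
  have h3 : (diffLaw ω ζ).real (Set.Iic t) = (diffLaw ω ζ).real (Set.Iio t) :=
    measureReal_congr (Iio_ae_eq_Iic' (diffLaw_singleton ω ζ hω t)).symm
  rw [h2, h3, ← probReal_compl_eq_one_sub measurableSet_Ici, Set.compl_Ici]

/-- Both sides are `P(Z + Z' ≤ W)` for independent `W ∼ ω`, `Z ∼ ζ`, `Z' ∼ η`. -/
lemma pair_symm (ω ζ η : Measure ℝ) [IsProbabilityMeasure ω] [IsProbabilityMeasure ζ]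
    [IsProbabilityMeasure η] :
    ∫⁻ y, η (Set.Iic y) ∂(diffLaw ω ζ) = ∫⁻ y, ζ (Set.Iic y) ∂(diffLaw ω η) := by
  have hmI : ∀ μ : Measure ℝ, Measurable fun y : ℝ => μ (Set.Iic y) := fun μ => by
    have : Monotone fun y : ℝ => μ (Set.Iic y) := fun a b hab =>
      measure_mono (Set.Iic_subset_Iic.2 hab)
    exact this.measurable
  have key : ∀ (ζ η : Measure ℝ) [IsProbabilityMeasure ζ] [IsProbabilityMeasure η],
      ∫⁻ y, η (Set.Iic y) ∂(diffLaw ω ζ) = ∫⁻ w, (ζ.conv η) (Set.Iic w) ∂ω := by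
    intro ζ η _ _
    rw [diffLaw, lintegral_map (hmI η) (by fun_prop), lintegral_prod]
    · refine lintegral_congr fun w => ?_
      have hm : Measurable fun p : ℝ × ℝ => p.1 + p.2 := by fun_prop
      rw [Measure.conv, Measure.map_apply hm measurableSet_Iic,
        Measure.prod_apply (hm measurableSet_Iic)]
      refine lintegral_congr fun z => ?_
      congr 1
      ext x
      simp only [Set.mem_preimage, Set.mem_Iic]
      constructor <;> intro h <;> linarith
    · exact ((hmI η).comp (by fun_prop)).aemeasurable
  rw [key, key, Measure.conv_comm]

/-- If `η` has cdf `F · f(K)`, with `F` and `K` the cdfs of `ξ` and `κ`, then the probability that an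
`η`-distributed variable is at most an independent `κ`-distributed one is the `ξ`-mean of
`∫_{K(x)}^1 f`. This is integration by parts, done by Fubini on `{x ≤ y}`. -/
lemma energy (ξ κ η : Measure ℝ) [IsProbabilityMeasure ξ] [IsProbabilityMeasure κ]
    [IsProbabilityMeasure η] (hκ : ∀ r, κ {r} = 0) (f : ℝ → ENNReal) (hf : Measurable f)
    (h : ∀ t, η (Set.Iic t) = ξ (Set.Iic t) * f (κ.real (Set.Iic t))) :
    ∫⁻ y, η (Set.Iic y) ∂κ = ∫⁻ x, (∫⁻ s in Set.Ioc (κ.real (Set.Iic x)) 1, f s) ∂ξ := by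
  have hg : Measurable fun y => f (κ.real (Set.Iic y)) :=
    hf.comp (continuous_real_Iic κ hκ).measurable
  set g := fun y => f (κ.real (Set.Iic y)) with hgdef
  have hs : MeasurableSet {p : ℝ × ℝ | p.1 ≤ p.2} := measurableSet_le (by fun_prop) (by fun_prop)
  have hm : Measurable fun p : ℝ × ℝ => Set.indicator {p : ℝ × ℝ | p.1 ≤ p.2} (fun p => g p.2) p :=
    (hg.comp measurable_snd).indicator hs
  calc ∫⁻ y, η (Set.Iic y) ∂κ
      = ∫⁻ y, ∫⁻ x, Set.indicator {p : ℝ × ℝ | p.1 ≤ p.2} (fun p => g p.2) (x, y) ∂ξ ∂κ := by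
        refine lintegral_congr fun y => ?_
        have : (fun x => Set.indicator {p : ℝ × ℝ | p.1 ≤ p.2} (fun p => g p.2) (x, y)) =
            Set.indicator (Set.Iic y) fun _ => g y := by
          ext x; simp [Set.indicator_apply]
        rw [this, lintegral_indicator_const measurableSet_Iic, h, mul_comm]
    _ = ∫⁻ x, ∫⁻ y, Set.indicator {p : ℝ × ℝ | p.1 ≤ p.2} (fun p => g p.2) (x, y) ∂κ ∂ξ :=
        (lintegral_lintegral_swap hm.aemeasurable).symm
    _ = _ := by
        refine lintegral_congr fun x => ?_
        have : (fun y => Set.indicator {p : ℝ × ℝ | p.1 ≤ p.2} (fun p => g p.2) (x, y)) =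
            Set.indicator (Set.Ici x) g := by
          ext y; simp [Set.indicator_apply]
        rw [this, lintegral_indicator measurableSet_Ici, setLIntegral_Ici_comp κ hκ f hf]

/-! ### Uniqueness for a general increasing function `φ` -/

/-- The energy identities for both equations have the same left-hand side by `pair_symm`, while
their right-hand integrands are ordered pointwise; hence the integrands agree `ξ`-a.e., and so do
the cdfs of the two difference laws since `φ > 0` on `(0, 1]`. -/
lemma ae_eq_of_system (ξ ω ζp ζm : Measure ℝ) [IsProbabilityMeasure ξ] [IsProbabilityMeasure ω]
    [IsProbabilityMeasure ζp] [IsProbabilityMeasure ζm] (hω : ∀ r, ω {r} = 0)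
    (φ : ℝ → ℝ) (hφm : Measurable φ) (hφpos : ∀ s, 0 < s → 0 < φ s)
    (hle : ∀ t, (diffLaw ω ζm).real (Set.Iic t) ≤ (diffLaw ω ζp).real (Set.Iic t))
    (hp : ∀ t, ζp.real (Set.Iic t) =
      ξ.real (Set.Iic t) * φ ((diffLaw ω ζm).real (Set.Iic t)))
    (hm : ∀ t, ζm.real (Set.Iic t) =
      ξ.real (Set.Iic t) * φ ((diffLaw ω ζp).real (Set.Iic t))) :
    ∀ᵐ x ∂ξ, (diffLaw ω ζm).real (Set.Iic x) = (diffLaw ω ζp).real (Set.Iic x) := by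
  set f : ℝ → ENNReal := fun s => ENNReal.ofReal (φ s) with hf
  have hfm : Measurable f := hφm.ennreal_ofReal
  have toENN : ∀ (η κ : Measure ℝ) [IsProbabilityMeasure η] (t : ℝ), η.real (Set.Iic t) =
      ξ.real (Set.Iic t) * φ (κ.real (Set.Iic t)) →
      η (Set.Iic t) = ξ (Set.Iic t) * f (κ.real (Set.Iic t)) := by
    intro η κ _ t h
    rw [← ofReal_measureReal (μ := η), h, ENNReal.ofReal_mul measureReal_nonneg,
      ofReal_measureReal]
  have e1 := energy ξ (diffLaw ω ζm) ζp (diffLaw_singleton ω ζm hω) f hfm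
    fun t => toENN _ _ t (hp t)
  have e2 := energy ξ (diffLaw ω ζp) ζm (diffLaw_singleton ω ζp hω) f hfm
    fun t => toENN _ _ t (hm t)
  have e3 := pair_symm ω ζm ζp
  have hmon : ∀ (κ : Measure ℝ) [IsProbabilityMeasure κ],
      Antitone fun x => ∫⁻ s in Set.Ioc (κ.real (Set.Iic x)) 1, f s := fun κ _ a b hab =>
    lintegral_mono_set (Set.Ioc_subset_Ioc_left (measureReal_mono (Set.Iic_subset_Iic.2 hab)))
  have hfin : ∀ (κ η : Measure ℝ) [IsProbabilityMeasure κ] [IsProbabilityMeasure η],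
      ∫⁻ y, η (Set.Iic y) ∂κ ≠ ⊤ := by
    intro κ η _ _
    refine ne_top_of_le_ne_top (b := 1) ENNReal.one_ne_top ?_
    calc ∫⁻ y, η (Set.Iic y) ∂κ ≤ ∫⁻ _, 1 ∂κ := lintegral_mono fun y => prob_le_one
      _ = 1 := by simp
  have hae := ae_eq_of_ae_le_of_lintegral_le (μ := ξ)
    (f := fun x => ∫⁻ s in Set.Ioc ((diffLaw ω ζp).real (Set.Iic x)) 1, f s)
    (g := fun x => ∫⁻ s in Set.Ioc ((diffLaw ω ζm).real (Set.Iic x)) 1, f s)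
    (Filter.Eventually.of_forall fun x => lintegral_mono_set (Set.Ioc_subset_Ioc_left (hle x)))
    (by rw [← e2]; exact hfin _ _) (hmon _).measurable.aemeasurable
    (by rw [← e1, ← e2, e3])
  have hfinm : ∀ᵐ x ∂ξ, ∫⁻ s in Set.Ioc ((diffLaw ω ζm).real (Set.Iic x)) 1, f s < ⊤ :=
    ae_lt_top (hmon _).measurable (by rw [← e1]; exact hfin _ _)
  filter_upwards [hae, hfinm] with x hx hxfin
  by_contra hne
  set a := (diffLaw ω ζm).real (Set.Iic x) with ha
  set b := (diffLaw ω ζp).real (Set.Iic x) with hb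
  have hab : a < b := lt_of_le_of_ne (hle x) hne
  have ha0 : 0 ≤ a := measureReal_nonneg
  have hb1 : b ≤ 1 := measureReal_le_one
  rw [← Set.Ioc_union_Ioc_eq_Ioc hab.le hb1, lintegral_union measurableSet_Ioc
    (Set.Ioc_disjoint_Ioc_of_le le_rfl)] at hx hxfin
  have hpos : 0 < ∫⁻ s in Set.Ioc a b, f s := by
    rw [setLIntegral_pos_iff hfm]
    have : Function.support f ∩ Set.Ioc a b = Set.Ioc a b := by
      refine Set.inter_eq_right.2 fun s hs => ?_
      simp only [Function.mem_support, hf, ne_eq, ENNReal.ofReal_eq_zero, not_le]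
      exact hφpos s (lt_of_le_of_lt ha0 hs.1)
    rw [this, Real.volume_Ioc]
    simpa using hab
  have hBfin : ∫⁻ s in Set.Ioc b 1, f s ≠ ⊤ := (lt_of_le_of_lt le_add_self hxfin).ne
  rw [add_comm] at hx
  exact absurd hx (ENNReal.lt_add_right hBfin hpos.ne').ne

/-- The uniqueness statement with an arbitrary continuous `φ`, strictly increasing on `[0, 1]`, in
place of the generating function. By `ae_eq_of_system` the difference `D` of the two cdfs vanishes
`ξ`-a.e.; the reflection argument through the support of `ω` extends this to all points. -/
lemma uniqueness (m : ℝ) (ξ ω ζp ζm : Measure ℝ) [IsProbabilityMeasure ξ]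
    [IsProbabilityMeasure ω] [IsProbabilityMeasure ζp] [IsProbabilityMeasure ζm]
    (hξ : ∀ r, ξ {r} = 0) (hξsupp : ξ (Set.Iio m) = 0)
    (hXpos : ∀ t, m < t → 0 < ξ.real (Set.Iic t)) (hω : ∀ r, ω {r} = 0)
    (φ : ℝ → ℝ) (hφc : Continuous φ) (hφpos : ∀ s, 0 < s → 0 < φ s)
    (hφinj : StrictMonoOn φ (Set.Icc 0 1))
    (hle : ∀ t, ζp.real (Set.Iic t) ≤ ζm.real (Set.Iic t))
    (hp : ∀ t, ζp.real (Set.Iic t) =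
      ξ.real (Set.Iic t) * φ (1 - ∫ v, ζm.real (Set.Iic (v - t)) ∂ω))
    (hm : ∀ t, ζm.real (Set.Iic t) =
      ξ.real (Set.Iic t) * φ (1 - ∫ v, ζp.real (Set.Iic (v - t)) ∂ω)) (t : ℝ) :
    ζp.real (Set.Iic t) = ζm.real (Set.Iic t) := by
  have hcK : ∀ ζ : Measure ℝ, [IsProbabilityMeasure ζ] →
      Continuous fun t => (diffLaw ω ζ).real (Set.Iic t) := fun ζ _ =>
    continuous_real_Iic _ (diffLaw_singleton ω ζ hω)
  have hint : ∀ ζ : Measure ℝ, [IsProbabilityMeasure ζ] → ∀ t,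
      Integrable (fun v => ζ.real (Set.Iic (v - t))) ω := by
    intro ζ _ t
    refine Integrable.of_bound (measurable_Iic_sub ζ t).ennreal_toReal.aestronglyMeasurable 1
      (Filter.Eventually.of_forall fun v => ?_)
    rw [Real.norm_eq_abs, abs_of_nonneg measureReal_nonneg]
    exact measureReal_le_one
  simp only [← diffLaw_Iic ω _ hω] at hp hm
  have hKle : ∀ t, (diffLaw ω ζm).real (Set.Iic t) ≤ (diffLaw ω ζp).real (Set.Iic t) := by
    intro t
    rw [diffLaw_Iic ω _ hω, diffLaw_Iic ω _ hω]
    exact sub_le_sub_left (integral_mono (hint _ _) (hint _ _) fun v => hle _) _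
  have hae := ae_eq_of_system ξ ω ζp ζm hω φ hφc.measurable hφpos hKle hp hm
  have hcF := continuous_real_Iic ξ hξ
  set D : ℝ → ℝ := fun t => ζm.real (Set.Iic t) - ζp.real (Set.Iic t) with hD
  have hDc : Continuous D := by
    have h1 : D = fun t => ξ.real (Set.Iic t) * φ ((diffLaw ω ζp).real (Set.Iic t)) -
        ξ.real (Set.Iic t) * φ ((diffLaw ω ζm).real (Set.Iic t)) := by
      ext t; rw [← hp, ← hm]
    rw [h1]
    exact (hcF.mul (hφc.comp (hcK _))).sub (hcF.mul (hφc.comp (hcK _)))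
  have hD0 : ∀ t, 0 ≤ D t := fun t => sub_nonneg.2 (hle t)
  have hDm : ∀ t, D t ≠ 0 → m < t := by
    intro t ht
    by_contra hmt
    have hF : ξ.real (Set.Iic t) = 0 := by
      rw [measureReal_def, ← measure_congr (Iio_ae_eq_Iic' (hξ t)),
        measure_mono_null (Set.Iio_subset_Iio (not_lt.1 hmt)) hξsupp, ENNReal.toReal_zero]
    apply ht
    simp only [hD, hp, hm, hF, zero_mul, sub_zero]
  have hDK : ∀ t, m < t → (D t = 0 ↔ (diffLaw ω ζm).real (Set.Iic t) =
      (diffLaw ω ζp).real (Set.Iic t)) := by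
    intro t ht
    have hF := (hXpos t ht).ne'
    simp only [hD, hp, hm]
    rw [sub_eq_zero, mul_right_inj' hF, eq_comm]
    exact hφinj.injOn.eq_iff ⟨measureReal_nonneg, measureReal_le_one⟩
      ⟨measureReal_nonneg, measureReal_le_one⟩
  have hDω : ∀ t, m < t → (D t = 0 ↔ ω {v | D (v - t) ≠ 0} = 0) := by
    intro t ht
    have hI : ∫ v, D (v - t) ∂ω =
        (diffLaw ω ζp).real (Set.Iic t) - (diffLaw ω ζm).real (Set.Iic t) := by
      rw [diffLaw_Iic ω _ hω, diffLaw_Iic ω _ hω, integral_sub (hint _ _) (hint _ _)]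
      ring
    have hz := integral_eq_zero_iff_of_nonneg (μ := ω) (f := fun v => D (v - t))
      (fun v => hD0 _) ((hint ζm t).sub (hint ζp t))
    rw [hDK t ht, eq_comm, ← sub_eq_zero, ← hI, hz]
    rfl
  -- a zero of `D` beyond `m` is reflected to a zero by every point of the support of `ω`
  have hDS : ∀ t, m < t → D t = 0 → ∀ w ∈ ω.support, D (w - t) = 0 := by
    intro t ht h0 w hw
    by_contra hne
    have hopen : IsOpen {v | D (v - t) ≠ 0} :=
      isOpen_ne_fun (hDc.comp (continuous_id.sub continuous_const)) continuous_const
    have := Measure.mem_support_iff_forall w |>.1 hw _ (hopen.mem_nhds hne)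
    exact this.ne' ((hDω t ht).1 h0)
  by_contra hcon
  have hDt : D t ≠ 0 := fun h => hcon (sub_eq_zero.1 h).symm
  have hmt := hDm t hDt
  -- `D` vanishes `ξ`-a.e. and `ξ` charges `(m, t]`, which gives a zero of `D` there
  obtain ⟨x, hmx, hxt, hx0⟩ : ∃ x, m < x ∧ x ≤ t ∧ D x = 0 := by
    have hpos : 0 < ξ (Set.Ioc m t) := by
      have h1 : ξ (Set.Iic m) = 0 := by
        rw [← measure_congr (Iio_ae_eq_Iic' (hξ m)), hξsupp]
      have h2 : 0 < ξ (Set.Iic t) := (ENNReal.toReal_pos_iff.1 (hXpos t hmt)).1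
      by_contra h3
      rw [← Set.Iic_union_Ioc_eq_Iic hmt.le,
        measure_union_null h1 (le_antisymm (not_lt.1 h3) bot_le)] at h2
      exact lt_irrefl _ h2
    obtain ⟨x, hx, hxK⟩ := (frequently_ae_mem_iff.2 hpos.ne').and_eventually hae |>.exists
    exact ⟨x, hx.1, hx.2, (hDK x hx.1).2 hxK⟩
  -- `a` is the last zero of `D` before `t`
  set Z : Set ℝ := {y | D y = 0} ∩ Set.Icc x t with hZ
  have hZc : IsClosed Z := (isClosed_eq hDc continuous_const).inter isClosed_Icc
  have hZb : BddAbove Z := ⟨t, fun y hy => hy.2.2⟩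
  have haZ : sSup Z ∈ Z := hZc.csSup_mem ⟨x, hx0, le_rfl, hxt⟩ hZb
  set a := sSup Z with ha
  have hma : m < a := lt_of_lt_of_le hmx haZ.2.1
  have hat : a < t := lt_of_le_of_ne haZ.2.2 fun h => hDt (h ▸ haZ.1)
  have hUat : ∀ y, a < y → y ≤ t → D y ≠ 0 := fun y h1 h2 h0 =>
    absurd (le_csSup hZb ⟨h0, (haZ.2.1.trans h1.le), h2⟩) (not_le.2 h1)
  -- on `(m, ∞)` and for `w` in the support, `D y = 0 ↔ D (w - y) = 0`, so the reflection in `w`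
  -- carries `(a, t]` to points where `D` does not vanish
  have hS : ∀ w ∈ ω.support, D (w - t) ≠ 0 → ∀ y, a < y → y ≤ t → D (w - y) ≠ 0 := by
    intro w hw hwt y h1 h2 h0
    have := hDm _ hwt
    have h3 := hDS (w - y) (by linarith) h0 w hw
    rw [sub_sub_cancel] at h3
    exact hUat y h1 h2 h3
  set V : Set ℝ := {v | D (v - t) ≠ 0} with hV
  have hVo : IsOpen V :=
    isOpen_ne_fun (hDc.comp (continuous_id.sub continuous_const)) continuous_const
  have hVpos : 0 < ω V := pos_iff_ne_zero.2 fun h => hDt ((hDω t hmt).2 h)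
  obtain ⟨w, hwV, hw⟩ := Measure.nonempty_inter_support_of_pos hVpos
  have hpos2 : 0 < ω ((V ∩ Metric.ball w (t - a)) \ {w}) := by
    rw [measure_sdiff_null (hω w)]
    exact Measure.mem_support_iff_forall w |>.1 hw _
      (Filter.inter_mem (hVo.mem_nhds hwV) (Metric.ball_mem_nhds w (by linarith)))
  -- two such reflection points at distance less than `t - a` are incompatible: the image `w' - a`
  -- of the zero `a` under one lies in the image of `(a, t]` under the other
  obtain ⟨w', ⟨⟨hwV', hball⟩, hne⟩, hw'⟩ := Measure.nonempty_inter_support_of_pos hpos2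
  rw [Metric.mem_ball, Real.dist_eq, abs_lt] at hball
  rcases lt_or_gt_of_ne (show w' ≠ w from hne) with hlt | hlt
  · refine hS w hw hwV (a + (w - w')) (by linarith) (by linarith) ?_
    rw [show w - (a + (w - w')) = w' - a by ring]
    exact hDS a hma haZ.1 w' hw'
  · refine hS w' hw' hwV' (a + (w' - w)) (by linarith) (by linarith) ?_
    rw [show w' - (a + (w' - w)) = w - a by ring]
    exact hDS a hma haZ.1 w hw

/-! ### The generating function -/

/-- Uniqueness of the solution of the recursive distributional system, continuous case:
if `ξ` is an atomless probability measure supported on `[m,∞)` with cdf positive on `(m,∞)`,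
`ω` is atomless, `π̂` has finite mean and `π̂({0}) < 1`, and `h₊ ≤ h₋` are cdfs of
probability measures satisfying `h₊(t) = h_X(t)·φ̂(1 - ∫ h₋(w-t) dω(w))` and
`h₋(t) = h_X(t)·φ̂(1 - ∫ h₊(w-t) dω(w))` for all `t`, then `h₊ = h₋`. -/
theorem stmt12 (m : ℝ) (ξ ω : Measure ℝ) [IsProbabilityMeasure ξ] [IsProbabilityMeasure ω]
    (πhat : Measure ℕ) [IsProbabilityMeasure πhat]
    (hξatomless : ∀ r : ℝ, ξ {r} = 0)
    (hξsupp : ξ (Set.Iio m) = 0)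
    (hXpos : ∀ t : ℝ, m < t → 0 < (ξ (Set.Iic t)).toReal)
    (hωatomless : ∀ r : ℝ, ω {r} = 0)
    (hπmean : ∑' k : ℕ, (k : ENNReal) * πhat {k} ≠ ⊤)
    (hπ0 : πhat {0} < 1)
    (ζp ζm : Measure ℝ) [IsProbabilityMeasure ζp] [IsProbabilityMeasure ζm]
    (hle : ∀ t : ℝ, (ζp (Set.Iic t)).toReal ≤ (ζm (Set.Iic t)).toReal)
    (hp : ∀ t : ℝ, (ζp (Set.Iic t)).toReal =
      (ξ (Set.Iic t)).toReal * (∑' k : ℕ, (πhat {k}).toReal *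
        (1 - ∫ v, (ζm (Set.Iic (v - t))).toReal ∂ω) ^ k))
    (hm : ∀ t : ℝ, (ζm (Set.Iic t)).toReal =
      (ξ (Set.Iic t)).toReal * (∑' k : ℕ, (πhat {k}).toReal *
        (1 - ∫ v, (ζp (Set.Iic (v - t))).toReal ∂ω) ^ k)) :
    ∀ t : ℝ, (ζp (Set.Iic t)).toReal = (ζm (Set.Iic t)).toReal := by
  set c : ℕ → ℝ := fun k => (πhat {k}).toReal with hc
  have hc0 : ∀ k, 0 ≤ c k := fun k => ENNReal.toReal_nonneg
  have hsum1 : ∑' k, πhat {k} = 1 := by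
    rw [← measure_univ (μ := πhat), ← Measure.tsum_indicator_apply_singleton πhat Set.univ
      MeasurableSet.univ]
    simp
  have hcs : Summable c := ENNReal.summable_toReal (by rw [hsum1]; exact ENNReal.one_ne_top)
  obtain ⟨n, hn, hcn⟩ : ∃ n, n ≠ 0 ∧ 0 < c n := by
    by_contra hall
    push Not at hall
    have hz : ∀ k, k ≠ 0 → πhat {k} = 0 := fun k hk => by
      have := le_antisymm (hall k hk) (hc0 k)
      exact ((ENNReal.toReal_eq_zero_iff _).1 this).resolve_right (measure_ne_top _ _)
    rw [tsum_eq_single 0 hz] at hsum1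
    exact absurd hsum1 hπ0.ne
  -- the generating function, with its argument clamped to the unit interval
  set p : ℝ → ℝ := fun s => max 0 (min s 1) with hpdef
  have hp01 : ∀ s, p s ∈ Set.Icc (0:ℝ) 1 := fun s =>
    ⟨le_max_left _ _, max_le zero_le_one (min_le_right _ _)⟩
  have hpid : ∀ s ∈ Set.Icc (0:ℝ) 1, p s = s := fun s hs => by
    simp only [hpdef, min_eq_left hs.2, max_eq_right hs.1]
  have hpc : Continuous p := by fun_prop
  have hbd : ∀ k, ∀ s ∈ Set.Icc (0:ℝ) 1, c k * s ^ k ≤ c k := fun k s hs =>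
    mul_le_of_le_one_right (hc0 k) (pow_le_one₀ hs.1 hs.2)
  have hnn : ∀ k, ∀ s ∈ Set.Icc (0:ℝ) 1, 0 ≤ c k * s ^ k := fun k s hs =>
    mul_nonneg (hc0 k) (pow_nonneg hs.1 k)
  have hss : ∀ s ∈ Set.Icc (0:ℝ) 1, Summable fun k => c k * s ^ k := fun s hs =>
    Summable.of_nonneg_of_le (fun k => hnn k s hs) (fun k => hbd k s hs) hcs
  set φ : ℝ → ℝ := fun s => ∑' k, c k * p s ^ k with hφ
  have hφc : Continuous φ :=
    continuous_tsum (fun k => by fun_prop) hcs fun k s => by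
      rw [Real.norm_eq_abs, abs_of_nonneg (hnn k _ (hp01 s))]
      exact hbd k _ (hp01 s)
  have hφpos : ∀ s, 0 < s → 0 < φ s := fun s hs => by
    have hps : 0 < p s := lt_max_of_lt_right (lt_min hs one_pos)
    exact (hss _ (hp01 s)).tsum_pos (fun k => hnn k _ (hp01 s)) n
      (mul_pos hcn (pow_pos hps n))
  have hφmono : StrictMonoOn φ (Set.Icc 0 1) := by
    intro s hs r hr hsr
    simp only [hφ, hpid s hs, hpid r hr]
    refine Summable.tsum_lt_tsum (i := n) (fun k => ?_) ?_ (hss s hs) (hss r hr)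
    · exact mul_le_mul_of_nonneg_left (pow_le_pow_left₀ hs.1 hsr.le k) (hc0 k)
    · exact mul_lt_mul_of_pos_left (pow_lt_pow_left₀ hsr hs.1 hn) hcn
  have h01 : ∀ ζ : Measure ℝ, [IsProbabilityMeasure ζ] → ∀ t : ℝ,
      1 - ∫ v, (ζ (Set.Iic (v - t))).toReal ∂ω ∈ Set.Icc (0:ℝ) 1 := fun ζ _ t => by
    have := diffLaw_Iic ω ζ hωatomless t
    simp only [measureReal_def] at this
    rw [← this]
    exact ⟨measureReal_nonneg, measureReal_le_one⟩
  refine uniqueness m ξ ω ζp ζm hξatomless hξsupp hXpos hωatomless φ hφc hφpos hφmono hle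
    (fun t => ?_) (fun t => ?_)
  · simp only [measureReal_def, hφ, hpid _ (h01 ζm t)]
    exact hp t
  · simp only [measureReal_def, hφ, hpid _ (h01 ζp t)]
    exact hm t
end

section
/- Let m ∈ ℝ. Let ξ be a probability measure on ℝ with cumulative distribution function h_X satisfying ξ((−∞,m)) = 0, ξ({t}) = 0 for every t > m (so ξ is continuous except possibly for an atom of mass α = ξ({m}) ∈ [0,1) at its minimum m), and h_X(t) > 0 for every t > m. Let ω be an atomless probability measure on ℝ. Let π̂ be a probability measure on ℕ₀ with finite mean and π̂({0}) < 1, with probability generating function φ̂. Suppose h_+ and h_- are cumulative distribution functions of probability measures on ℝ such that h_+(t) ≤ h_-(t) for all t ∈ ℝ and, for all t ∈ ℝ, h_+(t) = h_X(t) · φ̂( 1 − ∫ h_-(w − t) dω(w) ) and h_-(t) = h_X(t) · φ̂( 1 − ∫ h_+(w − t) dω(w) ). Then h_+ = h_-. -/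
/-!
Write `A(t) = ∫ h₋(w - t) dω(w)` and `B(t) = ∫ h₊(w - t) dω(w)`, so that `B ≤ A`,
`h₊ = h_X φ̂(1 - A)` and `h₋ = h_X φ̂(1 - B)`; both `A` and `B` decrease to `0`, and they are
continuous because `ω` is atomless. It suffices that `A = B` on `[m, ∞)`.

*Agreement at `m`.* For independent `X ∼ h₊`, `Y ∼ h₋`, `W ∼ ω`, both `∫ A dh₊` and `∫ B dh₋` equal
`P(X + Y ≤ W)` (`lintegral_tailProb_comm`). For `u > 0` the set `{A > u}` is null for `h₊` and for
`ξ`, or a half-line `(-∞, τ)` with `τ > m` and `A(τ) = u`; in both cases its `h₊`-mass is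
`ξ{A > u} φ̂(1 - u)` (`measure_superlevel`). By the layer-cake formula,
`∫ ξ{A > u} φ̂(1 - u) du = ∫ ξ{B > u} φ̂(1 - u) du`, and as `B ≤ A` the integrands agree almost
everywhere. For `B(m) < u < A(m)` they cannot, as then `ξ{B > u} = 0 < ξ{A > u}`; hence
`A(m) = B(m)` (`eq_at_min`).

*Propagation.* Let `D = {t ≥ m : A(t) = B(t)}`, a closed set containing `m`. If `t ∈ D`, then
`h₊(w - t) = h₋(w - t)` for `ω`-almost every `w`. At points `x > m`, equality `h₊(x) = h₋(x)` gives
`A(x) = B(x)`, because `φ̂` is strictly increasing and `h_X(x) > 0`. By continuity `s - t ∈ D` for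
every `s` in the support of `ω` with `s - t ≥ m`. Since no point of that support is isolated, such
reflections reach arbitrarily small translations, so `D` contains `[m, s - m]` for every `s` in the
support (`reflection_fill`). For the remaining `t ≥ m`, one has `w - t < m` for `ω`-almost every `w`,
so `A(t) = B(t) = 0`.
-/

open MeasureTheory

open Set Filter Topology ProbabilityTheory

/-- The probability generating function of a measure on `ℕ`. -/
noncomputable def pgf (π : Measure ℕ) (s : ℝ) : ℝ := ∑' k : ℕ, (π {k}).toReal * s ^ k

/-- For independent `W ∼ ω` and `Y ∼ μ`, the probability that `Y ≤ W - t`, as the average over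
`ω` of the cdf of `μ` at `w - t`. -/
noncomputable def tailProb (ω μ : Measure ℝ) (t : ℝ) : ℝ := ∫ v, (μ (Iic (v - t))).toReal ∂ω

lemma exists_mem_of_ae {μ : Measure ℝ} {s : Set ℝ} {p : ℝ → Prop} (hs : 0 < μ s)
    (hp : ∀ᵐ x ∂μ, p x) : ∃ x, x ∈ s ∧ p x := by
  by_contra! h
  exact hs.ne' (measure_mono_null (fun x hx => h x hx) (ae_iff.1 hp))

/-! ### The generating function -/

lemma summable_weights (π : Measure ℕ) [IsProbabilityMeasure π] :
    Summable fun k : ℕ => (π {k}).toReal := by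
  apply ENNReal.summable_toReal
  have h := measure_biUnion (μ := π) (s := (univ : Set ℕ)) (f := fun k => ({k} : Set ℕ))
    (countable_univ) (by intro a _ b _ hab; simpa [Function.onFun] using hab)
    (fun _ _ => measurableSet_singleton _)
  rw [← tsum_univ, ← h]
  exact measure_ne_top _ _

lemma summable_pgf (π : Measure ℕ) [IsProbabilityMeasure π] {s : ℝ} (hs : s ∈ Icc (0 : ℝ) 1) :
    Summable fun k : ℕ => (π {k}).toReal * s ^ k :=
  (summable_weights π).of_nonneg_of_le
    (fun k => mul_nonneg ENNReal.toReal_nonneg (pow_nonneg hs.1 k))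
    (fun _ => mul_le_of_le_one_right ENNReal.toReal_nonneg (pow_le_one₀ hs.1 hs.2))

lemma continuousOn_pgf (π : Measure ℕ) [IsProbabilityMeasure π] :
    ContinuousOn (pgf π) (Icc 0 1) := by
  refine continuousOn_tsum (u := fun k => (π {k}).toReal) (fun _ => by fun_prop)
    (summable_weights π) (fun k s hs => ?_)
  rw [Real.norm_of_nonneg (mul_nonneg ENNReal.toReal_nonneg (pow_nonneg hs.1 k))]
  exact mul_le_of_le_one_right ENNReal.toReal_nonneg (pow_le_one₀ hs.1 hs.2)

lemma exists_weight_pos (π : Measure ℕ) [IsProbabilityMeasure π] (h0 : π {0} < 1) :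
    ∃ k : ℕ, k ≠ 0 ∧ 0 < π {k} := by
  by_contra! h
  have h1 : π {0}ᶜ = 0 := by
    rw [← biUnion_of_singleton ({0}ᶜ : Set ℕ)]
    refine (measure_biUnion_null_iff (to_countable _)).2 fun _ hk => ?_
    exact le_antisymm (h _ hk) zero_le
  rw [(prob_compl_eq_zero_iff (measurableSet_singleton 0))] at h1
  exact h0.ne h1

lemma strictMonoOn_pgf (π : Measure ℕ) [IsProbabilityMeasure π] (h0 : π {0} < 1) :
    StrictMonoOn (pgf π) (Icc 0 1) := by
  intro s hs t ht hst
  obtain ⟨k, hk, hk'⟩ := exists_weight_pos π h0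
  refine Summable.tsum_lt_tsum (i := k) (fun j => ?_) ?_ (summable_pgf π hs) (summable_pgf π ht)
  · exact mul_le_mul_of_nonneg_left (pow_le_pow_left₀ hs.1 hst.le j) ENNReal.toReal_nonneg
  · exact mul_lt_mul_of_pos_left (pow_lt_pow_left₀ hst hs.1 hk)
      (ENNReal.toReal_pos hk'.ne' (measure_ne_top _ _))

lemma pgf_nonneg (π : Measure ℕ) {s : ℝ} (hs : 0 ≤ s) : 0 ≤ pgf π s :=
  tsum_nonneg fun k => mul_nonneg ENNReal.toReal_nonneg (pow_nonneg hs k)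

lemma pgf_pos (π : Measure ℕ) [IsProbabilityMeasure π] (h0 : π {0} < 1) {s : ℝ}
    (hs : 0 < s) (hs1 : s ≤ 1) : 0 < pgf π s :=
  (pgf_nonneg π le_rfl).trans_lt (strictMonoOn_pgf π h0 ⟨le_rfl, zero_le_one⟩ ⟨hs.le, hs1⟩ hs)

/-! ### Cumulative distribution functions and tail probabilities -/

lemma toReal_Iic (μ : Measure ℝ) [IsProbabilityMeasure μ] (t : ℝ) :
    (μ (Iic t)).toReal = cdf μ t := (cdf_eq_real μ t).symm

lemma continuousAt_cdf_iff (μ : Measure ℝ) [IsProbabilityMeasure μ] (t : ℝ) :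
    ContinuousAt (cdf μ) t ↔ μ {t} = 0 := by
  rw [(monotone_cdf μ).continuousAt_iff_leftLim_eq_rightLim, StieltjesFunction.rightLim_eq]
  conv_rhs => rw [← measure_cdf μ, StieltjesFunction.measure_singleton, ENNReal.ofReal_eq_zero]
  have := (monotone_cdf μ).leftLim_le (le_refl t)
  constructor <;> intro h <;> linarith

lemma tailProb_eq (ω μ : Measure ℝ) [IsProbabilityMeasure μ] (t : ℝ) :
    tailProb ω μ t = ∫ v, cdf μ (v - t) ∂ω := by
  simp only [tailProb, toReal_Iic]

lemma measurable_cdf_sub (μ : Measure ℝ) (t : ℝ) : Measurable fun v => cdf μ (v - t) :=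
  (monotone_cdf μ).measurable.comp (measurable_id.sub_const t)

lemma integrable_cdf_sub (ω μ : Measure ℝ) [IsProbabilityMeasure ω] (t : ℝ) :
    Integrable (fun v => cdf μ (v - t)) ω := by
  refine Integrable.of_bound (measurable_cdf_sub μ t).aestronglyMeasurable 1 (ae_of_all _ ?_)
  intro v
  rw [Real.norm_of_nonneg (cdf_nonneg μ _)]
  exact cdf_le_one μ _

section tail

variable (ω μ : Measure ℝ) [IsProbabilityMeasure ω] [IsProbabilityMeasure μ]

lemma tailProb_mem (t : ℝ) : tailProb ω μ t ∈ Icc (0 : ℝ) 1 := by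
  rw [tailProb_eq]
  refine ⟨integral_nonneg fun v => cdf_nonneg μ _, ?_⟩
  calc ∫ v, cdf μ (v - t) ∂ω ≤ ∫ _, (1 : ℝ) ∂ω :=
        integral_mono (integrable_cdf_sub ω μ t) (integrable_const _) fun v => cdf_le_one μ _
    _ = 1 := by simp

lemma one_sub_tailProb_mem (t : ℝ) : 1 - tailProb ω μ t ∈ Icc (0 : ℝ) 1 := by
  have := tailProb_mem ω μ t
  exact ⟨by linarith [this.2], by linarith [this.1]⟩

lemma antitone_tailProb : Antitone (tailProb ω μ) := by
  intro s t hst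
  rw [tailProb_eq, tailProb_eq]
  exact integral_mono (integrable_cdf_sub ω μ t) (integrable_cdf_sub ω μ s)
    fun v => monotone_cdf μ (by linarith)

lemma tailProb_mono (ν : Measure ℝ) [IsProbabilityMeasure ν] (h : ∀ t, cdf μ t ≤ cdf ν t) (t : ℝ) :
    tailProb ω μ t ≤ tailProb ω ν t := by
  rw [tailProb_eq, tailProb_eq]
  exact integral_mono (integrable_cdf_sub ω μ t) (integrable_cdf_sub ω ν t) fun v => h _

/-- A cdf has countably many discontinuities, which the atomless `ω` ignores. -/
lemma continuous_tailProb (hω : ∀ r : ℝ, ω {r} = 0) : Continuous (tailProb ω μ) := by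
  have : tailProb ω μ = fun t => ∫ v, cdf μ (v - t) ∂ω := funext (tailProb_eq ω μ)
  rw [this, continuous_iff_continuousAt]
  intro t
  refine continuousAt_of_dominated (bound := fun _ => 1)
    (Eventually.of_forall fun s => (measurable_cdf_sub μ s).aestronglyMeasurable)
    (Eventually.of_forall fun s => ae_of_all _ fun v => ?_) (integrable_const _) ?_
  · rw [Real.norm_of_nonneg (cdf_nonneg μ _)]
    exact cdf_le_one μ _
  · have hc := (monotone_cdf μ).countable_not_continuousAt
    have hn : ω ((fun x => x + t) '' {x | ¬ ContinuousAt (cdf μ) x}) = 0 := by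
      have := hc.image (fun x => x + t)
      rw [← biUnion_of_singleton ((fun x => x + t) '' {x | ¬ ContinuousAt (cdf μ) x})]
      exact (measure_biUnion_null_iff this).2 fun r _ => hω r
    filter_upwards [measure_eq_zero_iff_ae_notMem.1 hn] with v hv
    have hv' : ContinuousAt (cdf μ) (v - t) := by
      by_contra h
      exact hv ⟨v - t, h, by ring⟩
    exact ContinuousAt.comp (f := fun s : ℝ => v - s) hv' (by fun_prop)

lemma tendsto_tailProb : Tendsto (tailProb ω μ) atTop (𝓝 0) := by
  have h : Tendsto (fun t => ∫ v, cdf μ (v - t) ∂ω) atTop (𝓝 (∫ _, (0 : ℝ) ∂ω)) := by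
    refine tendsto_integral_filter_of_dominated_convergence (fun _ => 1)
      (Eventually.of_forall fun s => (measurable_cdf_sub μ s).aestronglyMeasurable)
      (Eventually.of_forall fun s => ae_of_all _ fun v => ?_) (integrable_const _)
      (ae_of_all _ fun v => ?_)
    · rw [Real.norm_of_nonneg (cdf_nonneg μ _)]
      exact cdf_le_one μ _
    · refine (tendsto_cdf_atBot μ).comp ?_
      exact (tendsto_atBot_add_const_left atTop v tendsto_neg_atTop_atBot).congr
        fun t => (sub_eq_add_neg v t).symm
  simp only [integral_zero] at h
  exact h.congr fun t => (tailProb_eq ω μ t).symm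

/-- Both sides are the probability that `X + Y ≤ W` for independent `X ∼ ν`, `Y ∼ μ`, `W ∼ ω`. -/
lemma lintegral_tailProb_comm (ν : Measure ℝ) [IsProbabilityMeasure ν] :
    ∫⁻ t, ENNReal.ofReal (tailProb ω μ t) ∂ν = ∫⁻ t, ENNReal.ofReal (tailProb ω ν t) ∂μ := by
  have key (α β : Measure ℝ) [IsProbabilityMeasure α] [IsProbabilityMeasure β] :
      ∫⁻ t, ENNReal.ofReal (tailProb ω α t) ∂β
        = ∫⁻ v, (β.prod α) {p | p.1 + p.2 ≤ v} ∂ω := by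
    have hmeas : Measurable fun p : ℝ × ℝ => α (Iic (p.2 - p.1)) := by
      have : (fun p : ℝ × ℝ => α (Iic (p.2 - p.1)))
          = fun p => ENNReal.ofReal (cdf α (p.2 - p.1)) := by
        ext p; rw [ofReal_cdf]
      rw [this]
      exact ((monotone_cdf α).measurable.comp (measurable_snd.sub measurable_fst)).ennreal_ofReal
    calc ∫⁻ t, ENNReal.ofReal (tailProb ω α t) ∂β
        = ∫⁻ t, ∫⁻ v, α (Iic (v - t)) ∂ω ∂β := by
          refine lintegral_congr fun t => ?_
          rw [tailProb_eq, ofReal_integral_eq_lintegral_ofReal (integrable_cdf_sub ω α t)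
            (ae_of_all _ fun v => cdf_nonneg α _)]
          exact lintegral_congr fun v => ofReal_cdf α _
      _ = ∫⁻ v, ∫⁻ t, α (Iic (v - t)) ∂β ∂ω :=
          lintegral_lintegral_swap hmeas.aemeasurable
      _ = _ := by
          refine lintegral_congr fun v => ?_
          rw [Measure.prod_apply (measurableSet_le (by fun_prop) (by fun_prop))]
          refine lintegral_congr fun t => ?_
          congr 1
          ext y
          simp only [mem_Iic, mem_preimage, mem_ofPred_eq]
          constructor <;> intro h <;> linarith
  rw [key μ ν, key ν μ]
  refine lintegral_congr fun v => ?_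
  rw [← Measure.prod_swap, Measure.map_apply measurable_swap
    (measurableSet_le (by fun_prop) (by fun_prop))]
  congr 1
  ext p
  simp [add_comm]

end tail

/-! ### Superlevel sets of the tail probability -/

/-- If the cdf of `μ` is the cdf of `ξ` times `φ̂(1 - A)`, then on a superlevel set `{A > u}`, a
half-line whose endpoint carries no mass and where `A = u`, the measures `μ` and `ξ` differ by
the factor `φ̂(1 - u)`. This replaces integration by parts. -/
lemma measure_superlevel (m : ℝ) (ξ μ : Measure ℝ) [IsProbabilityMeasure ξ]
    [IsProbabilityMeasure μ] (π : Measure ℕ) [IsProbabilityMeasure π]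
    (hξcont : ∀ t : ℝ, m < t → ξ {t} = 0) (hξsupp : ξ (Iio m) = 0)
    (A : ℝ → ℝ) (hA : Continuous A) (hanti : Antitone A) (hA01 : ∀ t, A t ∈ Icc (0 : ℝ) 1)
    (hA0 : Tendsto A atTop (𝓝 0))
    (hF : ∀ t, cdf μ t = cdf ξ t * pgf π (1 - A t)) {u : ℝ} (hu : 0 < u) :
    μ {t | u < A t} = ξ {t | u < A t} * ENNReal.ofReal (pgf π (1 - u)) := by
  have hIic (ν : Measure ℝ) [IsProbabilityMeasure ν] (t : ℝ) :
      ν (Iic t) = ENNReal.ofReal (cdf ν t) :=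
    (ofReal_cdf ν t).symm
  rcases le_or_gt (A m) u with hmu | hmu
  · have hsub : {t | u < A t} ⊆ Iio m := fun t ht => by
      by_contra h
      exact absurd (hanti (not_lt.1 h)) (not_le.2 (hmu.trans_lt ht))
    have hμ : μ (Iio m) = 0 := by
      have hx : ∀ t < m, μ (Iic t) = 0 := fun t ht => by
        have : ξ (Iic t) = 0 := measure_mono_null (Iic_subset_Iio.2 ht) hξsupp
        have h0 : cdf ξ t = 0 := by rw [← toReal_Iic, this]; rfl
        rw [hIic, hF, h0]; simp
      obtain ⟨w, -, hw, hwt⟩ := exists_seq_strictMono_tendsto m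
      have : Iio m ⊆ ⋃ n, Iic (w n) := fun t ht => by
        obtain ⟨n, hn⟩ := (hwt.eventually (eventually_gt_nhds ht)).exists
        exact mem_iUnion.2 ⟨n, le_of_lt hn⟩
      exact measure_mono_null this (measure_iUnion_null fun n => hx _ (hw n))
    rw [measure_mono_null hsub hμ, measure_mono_null hsub hξsupp, zero_mul]
  · set S := {t | A t ≤ u} with hS
    have hSne : S.Nonempty := by
      obtain ⟨t, ht⟩ := (hA0.eventually (eventually_lt_nhds hu)).exists
      exact ⟨t, ht.le⟩
    have hSm : ∀ t ∈ S, m < t := fun t ht => by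
      by_contra h
      exact absurd (hanti (not_lt.1 h)) (not_le.2 (lt_of_le_of_lt ht hmu))
    have hSbdd : BddBelow S := ⟨m, fun t ht => (hSm t ht).le⟩
    have hSc : IsClosed S := isClosed_le hA continuous_const
    obtain ⟨τ, hτ⟩ : ∃ τ, τ = sInf S := ⟨_, rfl⟩
    have hτS : τ ∈ S := hτ ▸ hSc.csInf_mem hSne hSbdd
    have hmτ := hSm τ hτS
    have hset : {t | u < A t} = Iio τ := by
      ext t
      refine ⟨fun ht => ?_, fun ht => ?_⟩
      · by_contra h
        exact absurd (hanti (not_lt.1 h)) (not_le.2 (lt_of_le_of_lt hτS ht))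
      · by_contra h
        have h' : τ ≤ t := hτ ▸ csInf_le hSbdd (show A t ≤ u from not_lt.1 h)
        exact absurd h' (not_le.2 ht)
    have hAτ : A τ = u := by
      obtain ⟨σ, hσ, hσu⟩ := intermediate_value_Icc' hmτ.le hA.continuousOn ⟨hτS, hmu.le⟩
      have : τ ≤ σ := hτ ▸ csInf_le hSbdd (show σ ∈ S from hσu.le)
      rwa [le_antisymm hσ.2 this] at hσu
    have hμτ : μ {τ} = 0 := by
      rw [← continuousAt_cdf_iff, show (cdf μ : ℝ → ℝ) = _ from funext hF]
      refine ((continuousAt_cdf_iff ξ τ).2 (hξcont τ hmτ)).mul ?_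
      refine ContinuousOn.continuousAt (s := univ) ?_ univ_mem
      exact (continuousOn_pgf π).comp (by fun_prop) fun t _ =>
        ⟨by linarith [(hA01 t).2], by linarith [(hA01 t).1]⟩
    rw [hset, measure_congr (Iio_ae_eq_Iic' hμτ), measure_congr (Iio_ae_eq_Iic' (hξcont τ hmτ)),
      hIic, hIic, hF, hAτ, ENNReal.ofReal_mul (cdf_nonneg ξ τ)]

/-- Agreement of the two tail probabilities at the minimum `m`, from the identity
`∫ A dμ = ∫ B dν` and the layer-cake formula: `∫ A dμ = ∫ φ̂(1 - u) ξ{A > u} du` and likewise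
for `B ≤ A`, so `ξ{A > u} = ξ{B > u}` for almost every `u`; this fails for `B m < u < A m`. -/
lemma eq_at_min (m : ℝ) (ξ μ ν : Measure ℝ) [IsProbabilityMeasure ξ]
    [IsProbabilityMeasure μ] [IsProbabilityMeasure ν] (π : Measure ℕ) [IsProbabilityMeasure π]
    (hπ0 : π {0} < 1)
    (hξcont : ∀ t : ℝ, m < t → ξ {t} = 0) (hξsupp : ξ (Iio m) = 0)
    (hXpos : ∀ t : ℝ, m < t → 0 < cdf ξ t)
    (A B : ℝ → ℝ) (hA : Continuous A) (hAanti : Antitone A) (hA01 : ∀ t, A t ∈ Icc (0 : ℝ) 1)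
    (hA0 : Tendsto A atTop (𝓝 0))
    (hB : Continuous B) (hBanti : Antitone B) (hB01 : ∀ t, B t ∈ Icc (0 : ℝ) 1)
    (hB0 : Tendsto B atTop (𝓝 0)) (hBA : ∀ t, B t ≤ A t)
    (hF : ∀ t, cdf μ t = cdf ξ t * pgf π (1 - A t))
    (hG : ∀ t, cdf ν t = cdf ξ t * pgf π (1 - B t))
    (hint : ∫⁻ t, ENNReal.ofReal (A t) ∂μ = ∫⁻ t, ENNReal.ofReal (B t) ∂ν) :
    A m = B m := by
  by_contra hne
  have hlt : B m < A m := lt_of_le_of_ne (hBA m) (Ne.symm hne)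
  have hfin : ∫⁻ t, ENNReal.ofReal (B t) ∂ν ≠ ⊤ := by
    refine ne_top_of_le_ne_top (b := ∫⁻ _, 1 ∂ν) (by simp) (lintegral_mono fun t => ?_)
    simpa using (hB01 t).2
  have hint' := hint
  rw [lintegral_eq_lintegral_meas_lt μ (ae_of_all _ fun t => (hA01 t).1) hA.aemeasurable,
    lintegral_eq_lintegral_meas_lt ν (ae_of_all _ fun t => (hB01 t).1) hB.aemeasurable] at hint'
  rw [lintegral_eq_lintegral_meas_lt ν (ae_of_all _ fun t => (hB01 t).1) hB.aemeasurable] at hfin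
  have hμA {u : ℝ} (hu : 0 < u) :=
    measure_superlevel m ξ μ π hξcont hξsupp A hA hAanti hA01 hA0 hF hu
  have hνB {u : ℝ} (hu : 0 < u) :=
    measure_superlevel m ξ ν π hξcont hξsupp B hB hBanti hB01 hB0 hG hu
  have hae : (fun u => ν {t | u < B t}) =ᵐ[volume.restrict (Ioi 0)] fun u => μ {t | u < A t} := by
    refine ae_eq_of_ae_le_of_lintegral_le ?_ hfin ?_ hint'.le
    · filter_upwards [ae_restrict_mem measurableSet_Ioi] with u hu
      rw [hμA hu, hνB hu]
      gcongr
      exact hBA _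
    · refine Antitone.measurable ?_ |>.aemeasurable
      intro u v huv
      exact measure_mono fun t ht => lt_of_le_of_lt huv ht
  rw [EventuallyEq, ae_restrict_iff' measurableSet_Ioi] at hae
  have hvol : 0 < volume (Ioo (B m) (A m)) := by simpa using hlt
  obtain ⟨u, ⟨hu1, hu2⟩, hu⟩ := exists_mem_of_ae hvol hae
  have hu0 : 0 < u := (hB01 m).1.trans_lt hu1
  have heq := hu hu0
  rw [hμA hu0, hνB hu0] at heq
  have h1 : ξ {t | u < B t} = 0 := by
    refine measure_mono_null (fun t ht => ?_) hξsupp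
    by_contra h
    exact absurd (hBanti (not_lt.1 h)) (not_le.2 (hu1.trans ht))
  have h2 : 0 < ξ {t | u < A t} := by
    have hev : ∀ᶠ t in 𝓝[>] m, u < A t :=
      (hA.continuousAt.eventually (eventually_gt_nhds hu2)).filter_mono nhdsWithin_le_nhds
    obtain ⟨t, htA, htm⟩ := (hev.and self_mem_nhdsWithin).exists
    have : 0 < ξ (Iic t) := by
      rw [← ofReal_cdf]; exact ENNReal.ofReal_pos.2 (hXpos t htm)
    exact this.trans_le (measure_mono fun s hs => htA.trans_le (hAanti hs))
  have h3 : 0 < pgf π (1 - u) :=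
    pgf_pos π hπ0 (by linarith [(hA01 m).2]) (by linarith)
  rw [h1, zero_mul, eq_comm, mul_eq_zero] at heq
  rcases heq with h | h
  · exact h2.ne' h
  · exact (ENNReal.ofReal_pos.2 h3).ne' h

/-! ### Propagation -/

/-- A closed set of reals containing `m` and stable under the reflections `t ↦ s - t` into
`[m, ∞)`, for `s` in the support of an atomless measure, has no gap in `[m, s - m]`: composing
two reflections is a translation by the difference of two support points, which can be made
nonzero and smaller than a given gap. -/
lemma reflection_fill (ω : Measure ℝ) [IsProbabilityMeasure ω] (hω : ∀ r : ℝ, ω {r} = 0)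
    (m : ℝ) (D : Set ℝ) (hD : IsClosed D) (hDm : ∀ t ∈ D, m ≤ t) (hm : m ∈ D)
    (hrefl : ∀ t ∈ D, ∀ s ∈ ω.support, m ≤ s - t → s - t ∈ D)
    {s t : ℝ} (hs : s ∈ ω.support) (hmt : m ≤ t) (hts : t ≤ s - m) : t ∈ D := by
  by_contra htD
  have hsD : s - m ∈ D := hrefl m hm s hs (hmt.trans hts)
  have haD := (hD.inter isClosed_Iic).csSup_mem (s := D ∩ Iic t) ⟨m, hm, hmt⟩ ⟨t, fun x hx => hx.2⟩
  have hbD := (hD.inter isClosed_Ici).csInf_mem (s := D ∩ Ici t) ⟨s - m, hsD, hts⟩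
    ⟨t, fun x hx => hx.2⟩
  have hagap : ∀ x ∈ D, x ≤ t → x ≤ sSup (D ∩ Iic t) := fun x hx hxt =>
    le_csSup ⟨t, fun x hx => hx.2⟩ ⟨hx, hxt⟩
  have hbgap : ∀ x ∈ D, t ≤ x → sInf (D ∩ Ici t) ≤ x := fun x hx hxt =>
    csInf_le ⟨t, fun x hx => hx.2⟩ ⟨hx, hxt⟩
  have hbs := hbgap _ hsD hts
  generalize sSup (D ∩ Iic t) = a at *
  generalize sInf (D ∩ Ici t) = b at *
  have hat : a < t := lt_of_le_of_ne haD.2 fun h => htD (h ▸ haD.1)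
  have hbt : t < b := lt_of_le_of_ne hbD.2 fun h => htD (h ▸ hbD.1)
  have hma := hDm a haD.1
  have hgap : ∀ x ∈ D, a < x → x < b → False := fun x hx hax hxb => by
    rcases le_total x t with h | h
    · linarith [hagap x hx h]
    · linarith [hbgap x hx h]
  obtain ⟨r, hr, hrs, hrS⟩ : ∃ r, r ∈ Ioo (s - (b - a)) (s + (b - a)) ∧ r ≠ s ∧ r ∈ ω.support := by
    have hpos : 0 < ω (Ioo (s - (b - a)) (s + (b - a)) \ {s}) := by
      rw [measure_sdiff_null (hω s)]
      exact (Measure.mem_support_iff_forall s).1 hs _ (Ioo_mem_nhds (by linarith) (by linarith))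
    obtain ⟨r, ⟨h1, h2⟩, h3⟩ :=
      exists_mem_of_ae hpos Measure.support_mem_ae
    exact ⟨r, h1, h2, h3⟩
  rcases lt_or_gt_of_ne hrs with h | h
  · have h1 := hrefl b hbD.1 s hs (by linarith)
    have h2 := hrefl _ h1 r hrS (by linarith [hr.1])
    exact hgap _ h2 (by linarith [hr.1]) (by linarith)
  · have h1 := hrefl a haD.1 s hs (by linarith)
    have h2 := hrefl _ h1 r hrS (by linarith)
    exact hgap _ h2 (by linarith) (by linarith [hr.2])

/-- Uniqueness of the solution of the recursive distributional system, allowing an atom of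
`ξ` at its minimum `m`: if `ξ` is a probability measure supported on `[m,∞)` that is
atomless outside a possible atom of mass `α = ξ({m}) < 1` at `m`, with cdf positive on
`(m,∞)`, `ω` is atomless, `π̂` has finite mean and `π̂({0}) < 1`, and `h₊ ≤ h₋` are cdfs of
probability measures satisfying `h₊(t) = h_X(t)·φ̂(1 - ∫ h₋(w-t) dω(w))` and
`h₋(t) = h_X(t)·φ̂(1 - ∫ h₊(w-t) dω(w))` for all `t`, then `h₊ = h₋`. -/
theorem stmt13 (m : ℝ) (ξ ω : Measure ℝ) [IsProbabilityMeasure ξ] [IsProbabilityMeasure ω]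
    (πhat : Measure ℕ) [IsProbabilityMeasure πhat]
    (hξcont : ∀ t : ℝ, m < t → ξ {t} = 0)
    (hξatom : ξ {m} < 1)
    (hξsupp : ξ (Set.Iio m) = 0)
    (hXpos : ∀ t : ℝ, m < t → 0 < (ξ (Set.Iic t)).toReal)
    (hωatomless : ∀ r : ℝ, ω {r} = 0)
    (hπmean : ∑' k : ℕ, (k : ENNReal) * πhat {k} ≠ ⊤)
    (hπ0 : πhat {0} < 1)
    (ζp ζm : Measure ℝ) [IsProbabilityMeasure ζp] [IsProbabilityMeasure ζm]
    (hle : ∀ t : ℝ, (ζp (Set.Iic t)).toReal ≤ (ζm (Set.Iic t)).toReal)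
    (hp : ∀ t : ℝ, (ζp (Set.Iic t)).toReal =
      (ξ (Set.Iic t)).toReal * (∑' k : ℕ, (πhat {k}).toReal *
        (1 - ∫ v, (ζm (Set.Iic (v - t))).toReal ∂ω) ^ k))
    (hm : ∀ t : ℝ, (ζm (Set.Iic t)).toReal =
      (ξ (Set.Iic t)).toReal * (∑' k : ℕ, (πhat {k}).toReal *
        (1 - ∫ v, (ζp (Set.Iic (v - t))).toReal ∂ω) ^ k)) :
    ∀ t : ℝ, (ζp (Set.Iic t)).toReal = (ζm (Set.Iic t)).toReal := by
  simp only [toReal_Iic] at hle hXpos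
  obtain ⟨A, hAdef⟩ : ∃ A, A = tailProb ω ζm := ⟨_, rfl⟩
  obtain ⟨B, hBdef⟩ : ∃ B, B = tailProb ω ζp := ⟨_, rfl⟩
  have hF : ∀ t, cdf ζp t = cdf ξ t * pgf πhat (1 - A t) := fun t => by
    rw [← toReal_Iic, ← toReal_Iic, hAdef]; exact hp t
  have hG : ∀ t, cdf ζm t = cdf ξ t * pgf πhat (1 - B t) := fun t => by
    rw [← toReal_Iic, ← toReal_Iic, hBdef]; exact hm t
  have hA : Continuous A := hAdef ▸ continuous_tailProb ω ζm hωatomless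
  have hB : Continuous B := hBdef ▸ continuous_tailProb ω ζp hωatomless
  have hA01 : ∀ t, A t ∈ Icc (0 : ℝ) 1 := hAdef ▸ tailProb_mem ω ζm
  have hB01 : ∀ t, B t ∈ Icc (0 : ℝ) 1 := hBdef ▸ tailProb_mem ω ζp
  have hA01' : ∀ t, 1 - A t ∈ Icc (0 : ℝ) 1 := hAdef ▸ one_sub_tailProb_mem ω ζm
  have hB01' : ∀ t, 1 - B t ∈ Icc (0 : ℝ) 1 := hBdef ▸ one_sub_tailProb_mem ω ζp
  have hABm : A m = B m := by
    refine eq_at_min m ξ ζp ζm πhat hπ0 hξcont hξsupp hXpos A B hA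
      (hAdef ▸ antitone_tailProb ω ζm) hA01 (hAdef ▸ tendsto_tailProb ω ζm) hB
      (hBdef ▸ antitone_tailProb ω ζp) hB01 (hBdef ▸ tendsto_tailProb ω ζp) ?_ hF hG ?_
    · rw [hAdef, hBdef]; exact tailProb_mono ω ζp ζm hle
    · rw [hAdef, hBdef]; exact lintegral_tailProb_comm ω ζm ζp
  -- Since `h₊ ≤ h₋`, the tail probabilities agree at `t` iff `h₊ = h₋` a.e. on the shifted `ω`.
  have hiff : ∀ t, A t = B t ↔ ∀ᵐ v ∂ω, cdf ζp (v - t) = cdf ζm (v - t) := fun t => by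
    rw [hAdef, hBdef, tailProb_eq, tailProb_eq, eq_comm]
    exact integral_eq_iff_of_ae_le (integrable_cdf_sub ω ζp t) (integrable_cdf_sub ω ζm t)
      (ae_of_all _ fun v => hle _)
  have hback : ∀ x, m < x → cdf ζp x = cdf ζm x → A x = B x := fun x hx h => by
    rw [hF, hG] at h
    have := (strictMonoOn_pgf πhat hπ0).injOn (hA01' x) (hB01' x)
      (mul_left_cancel₀ (hXpos x hx).ne' h)
    linarith
  have hrefl : ∀ t, A t = B t → ∀ s ∈ ω.support, m ≤ s - t → A (s - t) = B (s - t) := by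
    intro t ht s hs hst
    rcases hst.eq_or_lt with h | h
    · rw [← h, hABm]
    by_contra hne
    have hU : IsOpen {w : ℝ | m < w - t ∧ A (w - t) ≠ B (w - t)} :=
      IsOpen.inter (s := {w : ℝ | m < w - t}) (t := {w : ℝ | A (w - t) ≠ B (w - t)})
        (isOpen_lt (by fun_prop) (by fun_prop))
        (isOpen_ne_fun (by fun_prop) (by fun_prop))
    have hpos := (Measure.mem_support_iff_forall s).1 hs _ (hU.mem_nhds ⟨h, hne⟩)
    obtain ⟨w, ⟨hw1, hw2⟩, hw3⟩ := exists_mem_of_ae hpos ((hiff t).1 ht)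
    exact hw2 (hback _ hw1 hw3)
  have hzero : ∀ x < m, cdf ξ x = 0 := fun x hx => by
    rw [← toReal_Iic, measure_mono_null (Iic_subset_Iio.2 hx) hξsupp]; rfl
  have hAB : ∀ t, m ≤ t → A t = B t := by
    intro t hmt
    by_cases hex : ∃ s ∈ ω.support, t ≤ s - m
    · obtain ⟨s, hs, hts⟩ := hex
      exact (reflection_fill ω hωatomless m {x | m ≤ x ∧ A x = B x}
        ((isClosed_le continuous_const continuous_id).inter (isClosed_eq hA hB))
        (fun x hx => hx.1) ⟨le_rfl, hABm⟩
        (fun x hx s hs h => ⟨h, hrefl x hx.2 s hs h⟩) hs hmt hts).2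
    · push Not at hex
      rw [hiff]
      filter_upwards [Measure.support_mem_ae (μ := ω)] with v hv
      rw [hF, hG, hzero _ (by linarith [hex v hv]), zero_mul, zero_mul]
  intro t
  rw [toReal_Iic, toReal_Iic, hF, hG]
  rcases lt_or_ge t m with h | h
  · rw [hzero t h, zero_mul, zero_mul]
  · rw [hAB t h]
end
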